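/- Fix an integer t ≥ 2. For every ε > 0 there exists N such that for every n ≥ N and every simple graph G on n vertices, θ_t(G) ≤ (1 + ε)·θ_t(T_{n,t}), where θ_t denotes the minimum number of cliques of G needed to cover all t-cliques of G and T_{n,t} is the Turán graph. -/

import Mathlib

open scoped Classical
open Finset

/-- `K` is a clique of `G`: a nonempty set of pairwise adjacent vertices. -/
def IsCliqueOf {V : Type} [Fintype V] [DecidableEq V] (G : SimpleGraph V) (K : Finset V) : Prop :=
  K.Nonempty ∧ G.IsClique (K : Set V)

/-- Total `c`-cost of a weighting `f` of the finsets of vertices. -/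
noncomputable def cliqueCost {V : Type} [Fintype V] [DecidableEq V]
    (c : ℕ → ℝ) (f : Finset V → ℝ) : ℝ :=
  ∑ K : Finset V, c K.card * f K

/-- `f` is a fractional `t`-clique cover of `G`. -/
def IsFracCover {V : Type} [Fintype V] [DecidableEq V]
    (t : ℕ) (G : SimpleGraph V) (f : Finset V → ℝ) : Prop :=
  (∀ K, 0 ≤ f K) ∧ (∀ K, ¬ IsCliqueOf G K → f K = 0) ∧
  ∀ T : Finset V, T.card = t → G.IsClique (T : Set V) →
    1 ≤ ∑ K ∈ Finset.univ.filter (fun K => T ⊆ K), f K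

/-- `f` is a fractional `t`-clique decomposition of `G`. -/
def IsFracDecomp {V : Type} [Fintype V] [DecidableEq V]
    (t : ℕ) (G : SimpleGraph V) (f : Finset V → ℝ) : Prop :=
  (∀ K, 0 ≤ f K) ∧ (∀ K, ¬ IsCliqueOf G K → f K = 0) ∧
  ∀ T : Finset V, T.card = t → G.IsClique (T : Set V) →
    ∑ K ∈ Finset.univ.filter (fun K => T ⊆ K), f K = 1

/-- `f` is an integer (`{0,1}`-valued) `t`-clique cover of `G`. -/
def IsIntCover {V : Type} [Fintype V] [DecidableEq V]
    (t : ℕ) (G : SimpleGraph V) (f : Finset V → ℝ) : Prop :=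
  IsFracCover t G f ∧ ∀ K, f K = 0 ∨ f K = 1

/-- `f` is an integer (`{0,1}`-valued) `t`-clique decomposition of `G`. -/
def IsIntDecomp {V : Type} [Fintype V] [DecidableEq V]
    (t : ℕ) (G : SimpleGraph V) (f : Finset V → ℝ) : Prop :=
  IsFracDecomp t G f ∧ ∀ K, f K = 0 ∨ f K = 1

/-- θ*_t(G,c): minimum total c-cost of a fractional t-clique cover. -/
noncomputable def thetaFrac {V : Type} [Fintype V] [DecidableEq V]
    (t : ℕ) (G : SimpleGraph V) (c : ℕ → ℝ) : ℝ :=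
  sInf { x | ∃ f, IsFracCover t G f ∧ x = cliqueCost c f }

/-- θ_t(G,c): minimum total c-cost of an integer t-clique cover. -/
noncomputable def thetaInt {V : Type} [Fintype V] [DecidableEq V]
    (t : ℕ) (G : SimpleGraph V) (c : ℕ → ℝ) : ℝ :=
  sInf { x | ∃ f, IsIntCover t G f ∧ x = cliqueCost c f }

/-- π*_t(G,c): minimum total c-cost of a fractional t-clique decomposition. -/
noncomputable def piFrac {V : Type} [Fintype V] [DecidableEq V]
    (t : ℕ) (G : SimpleGraph V) (c : ℕ → ℝ) : ℝ :=
  sInf { x | ∃ f, IsFracDecomp t G f ∧ x = cliqueCost c f }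

/-- π_t(G,c): minimum total c-cost of an integer t-clique decomposition. -/
noncomputable def piInt {V : Type} [Fintype V] [DecidableEq V]
    (t : ℕ) (G : SimpleGraph V) (c : ℕ → ℝ) : ℝ :=
  sInf { x | ∃ f, IsIntDecomp t G f ∧ x = cliqueCost c f }

/-- `G` is complete multipartite: vertices can be assigned to parts so that
adjacency holds exactly between distinct parts. -/
def IsCompleteMultipartite {V : Type} [Fintype V] [DecidableEq V]
    (G : SimpleGraph V) : Prop :=
  ∃ p : V → ℕ, ∀ u v, G.Adj u v ↔ p u ≠ p v

section WeightedHypergraph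

variable {X : Type} [Fintype X] [DecidableEq X]

/-- Total weight of the hyperedges. -/
noncomputable def totalWeight (w : Finset X → ℝ) : ℝ := ∑ K, w K

/-- Weighted degree of a point. -/
noncomputable def wdeg (w : Finset X → ℝ) (x : X) : ℝ := ∑ K, if x ∈ K then w K else 0

/-- Weighted codegree of two points. -/
noncomputable def wcodeg (w : Finset X → ℝ) (x y : X) : ℝ :=
  ∑ K, if x ∈ K ∧ y ∈ K then w K else 0

/-- Kill the hyperedges meeting `K₀` and boost the others to compensate. -/
noncomputable def reweight (w : Finset X → ℝ) (K₀ : Finset X) : Finset X → ℝ := fun K =>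
  if Disjoint K K₀ then w K * (1 + ((#K : ℝ) - 1) / totalWeight w) else 0

/-- Squared deviation of the degrees from `1`. -/
noncomputable def deviation (U : Finset X) (w : Finset X → ℝ) : ℝ := ∑ x ∈ U, (wdeg w x - 1) ^ 2

/-- Sum of the codegrees at `x`. -/
noncomputable def codegSum (w : Finset X → ℝ) (x : X) : ℝ := ∑ y ∈ univ.erase x, wcodeg w x y

variable {w : Finset X → ℝ}

lemma wdeg_nonneg (hw : ∀ K, 0 ≤ w K) (x : X) : 0 ≤ wdeg w x :=
  sum_nonneg fun K _ => by split_ifs <;> simp [hw]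

lemma wcodeg_nonneg (hw : ∀ K, 0 ≤ w K) (x y : X) : 0 ≤ wcodeg w x y :=
  sum_nonneg fun K _ => by split_ifs <;> simp [hw]

lemma codegSum_nonneg (hw : ∀ K, 0 ≤ w K) (x : X) : 0 ≤ codegSum w x :=
  sum_nonneg fun y _ => wcodeg_nonneg hw x y

lemma wcodeg_comm (x y : X) : wcodeg w x y = wcodeg w y x := by
  simp only [wcodeg, and_comm]

lemma sum_mul_sum_mem (f : X → ℝ) : ∑ K, w K * ∑ x ∈ K, f x = ∑ x, wdeg w x * f x := by
  simp only [wdeg, sum_mul, mul_sum]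
  rw [sum_comm]
  refine sum_congr rfl fun K _ => ?_
  simp only [ite_mul, zero_mul]
  rw [sum_ite_mem]; simp

lemma sum_mem_mul_sum_mem (x : X) (f : X → ℝ) :
    ∑ K, (if x ∈ K then w K else 0) * ∑ y ∈ K, f y = ∑ y, wcodeg w x y * f y := by
  rw [sum_mul_sum_mem (w := fun K => if x ∈ K then w K else 0)]
  refine sum_congr rfl fun y _ => ?_
  congr 1
  simp only [wdeg, wcodeg]
  refine sum_congr rfl fun K _ => ?_
  by_cases hx : x ∈ K <;> by_cases hy : y ∈ K <;> simp [hx, hy]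

lemma codegSum_eq (x : X) :
    codegSum w x = ∑ K, (if x ∈ K then w K else 0) * ((#K : ℝ) - 1) := by
  have h := sum_mem_mul_sum_mem (w := w) x (fun y => if y = x then 0 else 1)
  have h1 : ∑ y, wcodeg w x y * (if y = x then (0 : ℝ) else 1) = codegSum w x := by
    rw [codegSum, ← sum_filter_add_sum_filter_not univ (fun y => y = x)]
    rw [sum_eq_zero, zero_add]
    · rw [show univ.erase x = univ.filter (fun y => ¬ y = x) by ext; simp]
      refine sum_congr rfl fun y hy => ?_
      simp at hy; simp [hy]
    · intro y hy; simp at hy; simp [hy]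
  rw [← h1, ← h]
  refine sum_congr rfl fun K _ => ?_
  by_cases hx : x ∈ K
  · congr 1
    rw [← add_sum_erase K _ hx]
    simp only [if_true, zero_add]
    rw [sum_congr rfl (g := fun _ => (1 : ℝ)) (fun y hy => by simp [(mem_erase.1 hy).1])]
    rw [sum_const, card_erase_of_mem hx, nsmul_eq_mul, mul_one, Nat.cast_sub (card_pos.2 ⟨x, hx⟩)]
    simp
  · simp [hx]

lemma codegSum_le {m : ℕ} {B : ℝ} (hw : ∀ K, 0 ≤ w K) (hm : ∀ K, w K ≠ 0 → #K ≤ m)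
    (hB : ∀ x, wdeg w x ≤ B) (x : X) : codegSum w x ≤ m * B := by
  rw [codegSum_eq]
  calc _ ≤ ∑ K, (if x ∈ K then w K else 0) * m := by
        refine sum_le_sum fun K _ => ?_
        by_cases h0 : w K = 0
        · simp [h0]
        · have : (#K : ℝ) ≤ m := by exact_mod_cast hm K h0
          refine mul_le_mul_of_nonneg_left (by linarith) ?_
          split_ifs <;> simp [hw]
    _ = m * wdeg w x := by rw [← sum_mul, mul_comm]; rfl
    _ ≤ _ := by gcongr; exact hB x

lemma sum_wdeg : ∑ x, wdeg w x = ∑ K, w K * #K := by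
  have := sum_mul_sum_mem (w := w) (fun _ => 1)
  simpa using this.symm

lemma wdeg_eq_zero {U : Finset X} (hU : ∀ K, w K ≠ 0 → K ⊆ U) {x : X} (hx : x ∉ U) :
    wdeg w x = 0 := by
  refine sum_eq_zero fun K _ => ?_
  split_ifs with h
  · by_contra h0; exact hx (hU K h0 h)
  · rfl

lemma wcodeg_eq_zero {U : Finset X} (hU : ∀ K, w K ≠ 0 → K ⊆ U) {x y : X} (hy : y ∉ U) :
    wcodeg w x y = 0 := by
  refine sum_eq_zero fun K _ => ?_
  split_ifs with h
  · by_contra h0; exact hy (hU K h0 h.2)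
  · rfl

/-- Weighted number of ordered pairs of distinct points in common to `K` and a hyperedge. -/
lemma sum_mul_card_offDiag_inter (K : Finset X) :
    ∑ K₀, w K₀ * (#(K ∩ K₀).offDiag : ℝ) = ∑ p ∈ K.offDiag, wcodeg w p.1 p.2 := by
  simp only [wcodeg]
  rw [sum_comm]
  refine sum_congr rfl fun K₀ _ => ?_
  rw [← sum_filter, sum_const, nsmul_eq_mul, mul_comm]
  congr 3
  ext p
  simp only [mem_offDiag, mem_inter, mem_filter]
  tauto

lemma sum_offDiag_wcodeg_le {m : ℕ} {κ : ℝ} (hκ0 : 0 ≤ κ)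
    (hκ : ∀ x y, x ≠ y → wcodeg w x y ≤ κ) {K : Finset X} (hK : #K ≤ m) :
    ∑ p ∈ K.offDiag, wcodeg w p.1 p.2 ≤ m * #K * κ := by
  calc _ ≤ ∑ p ∈ K.offDiag, κ := sum_le_sum fun p hp => hκ _ _ (mem_offDiag.1 hp).2.2
    _ = #K.offDiag * κ := by simp
    _ ≤ _ := by
      gcongr
      have : #K.offDiag ≤ m * #K := by
        rw [offDiag_card]; exact (Nat.sub_le _ _).trans (Nat.mul_le_mul_right _ hK)
      exact_mod_cast this

lemma le_one_add_card_offDiag (S : Finset X) (hS : S.Nonempty) :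
    (#S : ℝ) - 1 ≤ #S.offDiag := by
  have h : 1 ≤ #S := card_pos.2 hS
  rw [offDiag_card, Nat.cast_sub (Nat.le_mul_self _)]
  push_cast
  have : (1 : ℝ) ≤ #S := by exact_mod_cast h
  nlinarith

/-- Boosting factor minus its first-order approximation. -/
lemma reweight_bounds {m : ℕ} (hw : ∀ K, 0 ≤ w K) (hm : ∀ K, w K ≠ 0 → #K ≤ m)
    (hW : 0 < totalWeight w) (K₀ K : Finset X) :
    reweight w K₀ K ≤ w K * (1 - #(K ∩ K₀) + ((#K : ℝ) - 1) / totalWeight w + #(K ∩ K₀).offDiag) ∧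
    w K * (1 - #(K ∩ K₀) + ((#K : ℝ) - 1) / totalWeight w - m / totalWeight w * #(K ∩ K₀)) ≤
      reweight w K₀ K := by
  rw [reweight]
  split_ifs with h
  · rw [disjoint_iff_inter_eq_empty.1 h]; simp
  · have hne : (K ∩ K₀).Nonempty := by
      rwa [nonempty_iff_ne_empty, Ne, ← disjoint_iff_inter_eq_empty]
    by_cases h0 : w K = 0
    · simp [h0]
    have h1 := le_one_add_card_offDiag _ hne
    have h2 : (1 : ℝ) ≤ #(K ∩ K₀) := by exact_mod_cast card_pos.2 hne
    have h3 : (#(K ∩ K₀) : ℝ) ≤ #K := by exact_mod_cast card_le_card inter_subset_left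
    have h4 : (#K : ℝ) ≤ m := by exact_mod_cast hm K h0
    have h5 : 0 ≤ ((#K : ℝ) - 1) / totalWeight w := div_nonneg (by linarith) hW.le
    constructor
    · exact mul_nonneg (hw K) (by linarith)
    · refine mul_nonpos_of_nonneg_of_nonpos (hw K) ?_
      have : ((#K : ℝ) - 1) / totalWeight w ≤ m / totalWeight w * #(K ∩ K₀) := by
        rw [div_mul_eq_mul_div]; gcongr
        nlinarith
      linarith

lemma reweight_nonneg (hw : ∀ K, 0 ≤ w K) (hW : 1 ≤ totalWeight w) (K₀ K : Finset X) :
    0 ≤ reweight w K₀ K := by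
  rw [reweight]
  split_ifs
  · refine mul_nonneg (hw K) ?_
    rw [sub_div]
    have : 1 / totalWeight w ≤ 1 := by rw [div_le_one] <;> linarith
    have : 0 ≤ (#K : ℝ) / totalWeight w := by positivity
    linarith
  · rfl

lemma reweight_le {m : ℕ} (hw : ∀ K, 0 ≤ w K) (hm : ∀ K, w K ≠ 0 → #K ≤ m)
    (hW : 1 ≤ totalWeight w) (K₀ K : Finset X) :
    reweight w K₀ K ≤ (1 + m / totalWeight w) * w K := by
  have h1 := hw K
  rw [reweight]
  split_ifs
  · rw [mul_comm]
    by_cases h0 : w K = 0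
    · simp [h0]
    have h4 : (#K : ℝ) ≤ m := by exact_mod_cast hm K h0
    gcongr; linarith
  · positivity

lemma reweight_ne_zero {K₀ K : Finset X} (h : reweight w K₀ K ≠ 0) : w K ≠ 0 ∧ Disjoint K K₀ := by
  rw [reweight] at h
  split_ifs at h with hd
  · exact ⟨left_ne_zero_of_mul h, hd⟩
  · exact absurd rfl h

lemma wdeg_mono {w' : Finset X → ℝ} {c : ℝ} (h : ∀ K, w' K ≤ c * w K) (x : X) :
    wdeg w' x ≤ c * wdeg w x := by
  rw [wdeg, wdeg, mul_sum]
  refine sum_le_sum fun K _ => ?_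
  split_ifs <;> simp [h]

lemma wcodeg_mono {w' : Finset X → ℝ} {c : ℝ} (h : ∀ K, w' K ≤ c * w K) (x y : X) :
    wcodeg w' x y ≤ c * wcodeg w x y := by
  rw [wcodeg, wcodeg, mul_sum]
  refine sum_le_sum fun K _ => ?_
  split_ifs <;> simp [h]

/-- Codegree of `x` towards the points of `K₀` other than `x`. -/
noncomputable def hitWeight (w : Finset X → ℝ) (x : X) (K₀ : Finset X) : ℝ :=
  ∑ y ∈ K₀, if y = x then 0 else wcodeg w x y

/-- Weighted number of pairs shared by `K₀` and the hyperedges at `x`. -/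
noncomputable def overlapWeight (w : Finset X → ℝ) (x : X) (K₀ : Finset X) : ℝ :=
  ∑ K, (if x ∈ K then w K else 0) * (#(K ∩ K₀).offDiag : ℝ)

lemma hitWeight_nonneg (hw : ∀ K, 0 ≤ w K) (x : X) (K₀ : Finset X) : 0 ≤ hitWeight w x K₀ :=
  sum_nonneg fun y _ => by split_ifs <;> simp [wcodeg_nonneg hw]

lemma overlapWeight_nonneg (hw : ∀ K, 0 ≤ w K) (x : X) (K₀ : Finset X) :
    0 ≤ overlapWeight w x K₀ :=
  sum_nonneg fun y _ => by split_ifs <;> simp [hw, mul_nonneg]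

lemma hitWeight_le {m : ℕ} {κ : ℝ} (hκ0 : 0 ≤ κ) (hκ : ∀ x y, x ≠ y → wcodeg w x y ≤ κ)
    (x : X) {K₀ : Finset X} (hK : #K₀ ≤ m) : hitWeight w x K₀ ≤ m * κ := by
  calc _ ≤ ∑ y ∈ K₀, κ := sum_le_sum fun y _ => by
          split_ifs with h
          · exact hκ0
          · exact hκ _ _ (Ne.symm h)
    _ = #K₀ * κ := by simp
    _ ≤ _ := by gcongr

lemma sum_mul_hitWeight (x : X) :
    ∑ K₀, w K₀ * hitWeight w x K₀ = ∑ y ∈ univ.erase x, wcodeg w x y * wdeg w y := by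
  simp only [hitWeight]
  rw [sum_mul_sum_mem]
  rw [← add_sum_erase univ _ (mem_univ x)]
  simp only [if_true, mul_zero, zero_add]
  refine sum_congr rfl fun y hy => ?_
  rw [if_neg (mem_erase.1 hy).1, mul_comm]

lemma sum_mul_hitWeight_le {m : ℕ} {B : ℝ} (hw : ∀ K, 0 ≤ w K) (hm : ∀ K, w K ≠ 0 → #K ≤ m)
    (hB : ∀ x, wdeg w x ≤ B) (hB0 : 0 ≤ B) (x : X) :
    ∑ K₀, w K₀ * hitWeight w x K₀ ≤ m * B * B := by
  rw [sum_mul_hitWeight]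
  calc _ ≤ ∑ y ∈ univ.erase x, wcodeg w x y * B :=
        sum_le_sum fun y _ => mul_le_mul_of_nonneg_left (hB y) (wcodeg_nonneg hw _ _)
    _ = codegSum w x * B := by rw [codegSum, sum_mul]
    _ ≤ _ := by gcongr; exact codegSum_le hw hm hB x

lemma sum_mul_overlapWeight_le {m : ℕ} {B κ : ℝ} (hw : ∀ K, 0 ≤ w K)
    (hm : ∀ K, w K ≠ 0 → #K ≤ m) (hB : ∀ x, wdeg w x ≤ B) (hκ0 : 0 ≤ κ)
    (hκ : ∀ x y, x ≠ y → wcodeg w x y ≤ κ) (x : X) :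
    ∑ K₀, w K₀ * overlapWeight w x K₀ ≤ m * m * κ * B := by
  have : ∑ K₀, w K₀ * overlapWeight w x K₀ =
      ∑ K, (if x ∈ K then w K else 0) * ∑ p ∈ K.offDiag, wcodeg w p.1 p.2 := by
    simp only [overlapWeight, ← sum_mul_card_offDiag_inter, mul_sum]
    rw [sum_comm]
    exact sum_congr rfl fun _ _ => sum_congr rfl fun _ _ => by ring
  rw [this]
  calc _ ≤ ∑ K, (if x ∈ K then w K else 0) * (m * m * κ) := by
        refine sum_le_sum fun K _ => ?_
        by_cases h0 : w K = 0
        · simp [h0]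
        refine mul_le_mul_of_nonneg_left ?_ (by split_ifs <;> simp [hw])
        refine (sum_offDiag_wcodeg_le hκ0 hκ (hm K h0)).trans ?_
        have : (#K : ℝ) ≤ m := by exact_mod_cast hm K h0
        gcongr
    _ = m * m * κ * wdeg w x := by rw [← sum_mul, mul_comm]; rfl
    _ ≤ _ := by gcongr; exact hB x

lemma sum_card_inter_eq_hitWeight {x : X} {K₀ : Finset X} (hx : x ∉ K₀) :
    ∑ K, (if x ∈ K then w K else 0) * (#(K ∩ K₀) : ℝ) = hitWeight w x K₀ := by
  have h := sum_mem_mul_sum_mem (w := w) x (fun y => if y ∈ K₀ then 1 else 0)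
  have h1 : ∀ K : Finset X, ∑ y ∈ K, (if y ∈ K₀ then (1 : ℝ) else 0) = #(K ∩ K₀) := by
    intro K; simp
  simp only [h1] at h
  rw [h, hitWeight]
  simp only [mul_ite, mul_one, mul_zero]
  rw [sum_ite_mem, univ_inter]
  refine sum_congr rfl fun y hy => ?_
  rw [if_neg]; rintro rfl; exact hx hy

lemma wdeg_reweight_bounds {m : ℕ} (hw : ∀ K, 0 ≤ w K) (hm : ∀ K, w K ≠ 0 → #K ≤ m)
    (hW : 0 < totalWeight w) {x : X} {K₀ : Finset X} (hx : x ∉ K₀) :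
    wdeg (reweight w K₀) x ≤
      wdeg w x - hitWeight w x K₀ + codegSum w x / totalWeight w + overlapWeight w x K₀ ∧
    wdeg w x - hitWeight w x K₀ + codegSum w x / totalWeight w -
      m / totalWeight w * hitWeight w x K₀ ≤ wdeg (reweight w K₀) x := by
  rw [← sum_card_inter_eq_hitWeight hx, codegSum_eq, overlapWeight, wdeg, wdeg, sum_div,
    ← sum_sub_distrib, ← sum_add_distrib, ← sum_add_distrib, mul_sum, ← sum_sub_distrib]
  constructor
  · refine sum_le_sum fun K _ => ?_
    split_ifs
    · refine (reweight_bounds hw hm hW K₀ K).1.trans (le_of_eq ?_); ring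
    · simp
  · refine sum_le_sum fun K _ => ?_
    split_ifs
    · refine (reweight_bounds hw hm hW K₀ K).2.trans' (le_of_eq ?_); ring
    · simp

lemma sq_dev_reweight_le {m : ℕ} {B κ : ℝ} (hw : ∀ K, 0 ≤ w K) (hm : ∀ K, w K ≠ 0 → #K ≤ m)
    (hW : 1 ≤ totalWeight w) (hκ : ∀ x y, x ≠ y → wcodeg w x y ≤ κ) (hκ0 : 0 ≤ κ)
    (hB : ∀ x, wdeg w x ≤ B) (hB1 : 1 ≤ B) (hWκ : 1 ≤ κ * totalWeight w)
    (hmκ : m * B * κ ≤ 1) (x : X) {K₀ : Finset X} (hK : #K₀ ≤ m) :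
    0 ≤ (wdeg w x - 1) ^ 2 + 2 * (wdeg w x - 1) *
          (codegSum w x / totalWeight w - hitWeight w x K₀) +
        m * B * κ * (codegSum w x / totalWeight w + hitWeight w x K₀) +
        4 * B * (overlapWeight w x K₀ + m / totalWeight w * hitWeight w x K₀) ∧
    (x ∉ K₀ → (wdeg (reweight w K₀) x - 1) ^ 2 ≤
        (wdeg w x - 1) ^ 2 + 2 * (wdeg w x - 1) *
          (codegSum w x / totalWeight w - hitWeight w x K₀) +
        m * B * κ * (codegSum w x / totalWeight w + hitWeight w x K₀) +
        4 * B * (overlapWeight w x K₀ + m / totalWeight w * hitWeight w x K₀)) := by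
  have hW0 : 0 < totalWeight w := by linarith
  have hh := hitWeight_nonneg hw x K₀
  have ho := overlapWeight_nonneg hw x K₀
  have hh2 := hitWeight_le hκ0 hκ x hK
  have hs : 0 ≤ codegSum w x / totalWeight w := div_nonneg (codegSum_nonneg hw x) hW0.le
  have hs2 : codegSum w x / totalWeight w ≤ m * B * κ := by
    rw [div_le_iff₀ hW0]
    calc _ ≤ m * B * 1 := by rw [mul_one]; exact codegSum_le hw hm hB x
      _ ≤ m * B * (κ * totalWeight w) := by gcongr
      _ = _ := by ring
  have hh3 : hitWeight w x K₀ ≤ m * B * κ := by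
    refine hh2.trans ?_
    have : (m : ℝ) * 1 * κ ≤ m * B * κ := by gcongr
    linarith
  have hd := wdeg_nonneg hw x
  have hdB := hB x
  set r := overlapWeight w x K₀ + m / totalWeight w * hitWeight w x K₀ with hr
  have hr1 : 0 ≤ m / totalWeight w * hitWeight w x K₀ := by positivity
  set e := wdeg w x - 1 with he
  set s := codegSum w x / totalWeight w
  set h := hitWeight w x K₀
  set C := m * B * κ
  have hy : (s - h) ^ 2 ≤ C * (s + h) := by nlinarith
  have hr0 : 0 ≤ 4 * B * r := by positivity
  constructor
  · nlinarith [sq_nonneg (e + (s - h))]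
  · intro hx
    obtain ⟨hu, hl⟩ := wdeg_reweight_bounds hw hm hW0 hx
    have h0 := wdeg_nonneg (reweight_nonneg hw hW K₀) x
    have h1 : wdeg (reweight w K₀) x ≤ 2 * B := by
      refine (wdeg_mono (reweight_le hw hm hW K₀) x).trans ?_
      have : m / totalWeight w ≤ 1 := by
        rw [div_le_one hW0]
        have h2 : (m : ℝ) * 1 * κ ≤ m * B * κ := by gcongr
        nlinarith [(Nat.cast_nonneg m : (0 : ℝ) ≤ m)]
      calc _ ≤ (1 + 1) * wdeg w x := by gcongr
        _ ≤ _ := by linarith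
    set d' := wdeg (reweight w K₀) x
    have key : (d' - 1) ^ 2 ≤ (e + (s - h)) ^ 2 + 4 * B * r := by
      have a1 : (d' - 1) - (e + (s - h)) ≤ r := by linarith
      have a2 : -r ≤ (d' - 1) - (e + (s - h)) := by linarith
      have b1 : (d' - 1) + (e + (s - h)) ≤ 4 * B := by linarith
      have b2 : -(4 * B) ≤ (d' - 1) + (e + (s - h)) := by linarith
      have : ((d' - 1) - (e + (s - h))) * ((d' - 1) + (e + (s - h))) ≤ r * (4 * B) := by
        refine (le_abs_self _).trans ?_
        rw [abs_mul]
        exact mul_le_mul (abs_le.2 ⟨a2, a1⟩) (abs_le.2 ⟨b2, b1⟩) (abs_nonneg _) (by linarith)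
      nlinarith
    nlinarith

lemma sum_cross_terms_le {m : ℕ} {B : ℝ} {U : Finset X} (hw : ∀ K, 0 ≤ w K)
    (hm : ∀ K, w K ≠ 0 → #K ≤ m) (hU : ∀ K, w K ≠ 0 → K ⊆ U) (hB : ∀ x, wdeg w x ≤ B) :
    ∑ x ∈ U, 2 * (wdeg w x - 1) * (codegSum w x - ∑ K₀, w K₀ * hitWeight w x K₀) ≤
      2 * m * B * deviation U w := by
  set e : X → ℝ := fun x => wdeg w x - 1 with he
  set c : X → X → ℝ := fun x y => if y = x then 0 else wcodeg w x y with hc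
  have hc0 : ∀ x y, 0 ≤ c x y := fun x y => by
    simp only [hc]; split_ifs <;> simp [wcodeg_nonneg hw]
  have hcU : ∀ (x : X) (f : X → ℝ),
      ∑ y ∈ univ.erase x, wcodeg w x y * f y = ∑ y ∈ U, c x y * f y := by
    intro x f
    have h1 : ∑ y ∈ univ.erase x, wcodeg w x y * f y = ∑ y, c x y * f y := by
      rw [← add_sum_erase univ _ (mem_univ x)]
      simp only [hc, if_true, zero_mul, zero_add]
      exact sum_congr rfl fun y hy => by rw [if_neg (mem_erase.1 hy).1]
    rw [h1]
    symm
    refine sum_subset (subset_univ U) fun y _ hy => ?_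
    simp [hc, wcodeg_eq_zero hU hy]
  have hcs : ∀ x, codegSum w x = ∑ y ∈ U, c x y := fun x => by
    simpa [codegSum] using hcU x (fun _ => 1)
  have hsym : ∀ x y, c x y = c y x := fun x y => by
    simp only [hc, wcodeg_comm x y, eq_comm]
  have hx : ∀ x, codegSum w x - ∑ K₀, w K₀ * hitWeight w x K₀ = - ∑ y ∈ U, c x y * e y := by
    intro x
    rw [sum_mul_hitWeight, hcU, hcs, ← sum_sub_distrib, ← sum_neg_distrib]
    exact sum_congr rfl fun y _ => by simp only [he]; ring
  calc _ ≤ ∑ x ∈ U, ∑ y ∈ U, (c x y * e x ^ 2 + c y x * e y ^ 2) := by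
        refine sum_le_sum fun x _ => ?_
        rw [hx, ← sum_neg_distrib, mul_sum]
        refine sum_le_sum fun y _ => ?_
        rw [← hsym x y]
        nlinarith [mul_nonneg (hc0 x y) (sq_nonneg (e x + e y))]
    _ = ∑ x ∈ U, 2 * (codegSum w x * e x ^ 2) := by
        simp only [sum_add_distrib]
        rw [sum_comm (f := fun x y => c y x * e y ^ 2), ← sum_add_distrib]
        refine sum_congr rfl fun x _ => ?_
        rw [hcs, sum_mul]; ring
    _ ≤ ∑ x ∈ U, 2 * (m * B * e x ^ 2) := by
        gcongr with x; exact codegSum_le hw hm hB x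
    _ = _ := by
        rw [deviation, mul_sum]
        exact sum_congr rfl fun x _ => by simp only [he]; ring

lemma sum_mul_deviation_le {m : ℕ} {B κ : ℝ} {U : Finset X} (hw : ∀ K, 0 ≤ w K)
    (hm : ∀ K, w K ≠ 0 → #K ≤ m) (hU : ∀ K, w K ≠ 0 → K ⊆ U)
    (hW : 1 ≤ totalWeight w) (hκ : ∀ x y, x ≠ y → wcodeg w x y ≤ κ) (hκ0 : 0 ≤ κ)
    (hB : ∀ x, wdeg w x ≤ B) (hB1 : 1 ≤ B) (hWκ : 1 ≤ κ * totalWeight w)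
    (hmκ : m * B * κ ≤ 1) :
    ∑ K₀, w K₀ * deviation (U \ K₀) (reweight w K₀) ≤
      (totalWeight w + 2 * m * B) * deviation U w + 10 * m ^ 2 * B ^ 3 * κ * #U := by
  have hW0 : 0 < totalWeight w := by linarith
  have hB0 : 0 ≤ B := by linarith
  set R : X → Finset X → ℝ := fun x K₀ => (wdeg w x - 1) ^ 2 + 2 * (wdeg w x - 1) *
          (codegSum w x / totalWeight w - hitWeight w x K₀) +
        m * B * κ * (codegSum w x / totalWeight w + hitWeight w x K₀) +
        4 * B * (overlapWeight w x K₀ + m / totalWeight w * hitWeight w x K₀) with hR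
  have step : ∀ K₀, w K₀ * deviation (U \ K₀) (reweight w K₀) ≤ ∑ x ∈ U, w K₀ * R x K₀ := by
    intro K₀
    by_cases h0 : w K₀ = 0
    · simp [h0]
    rw [← mul_sum]
    refine mul_le_mul_of_nonneg_left ?_ (hw K₀)
    rw [deviation]
    calc _ ≤ ∑ x ∈ U \ K₀, R x K₀ := sum_le_sum fun x hx =>
          (sq_dev_reweight_le hw hm hW hκ hκ0 hB hB1 hWκ hmκ x (hm K₀ h0)).2 (mem_sdiff.1 hx).2
      _ ≤ _ := sum_le_sum_of_subset_of_nonneg sdiff_subset fun x _ _ =>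
          (sq_dev_reweight_le hw hm hW hκ hκ0 hB hB1 hWκ hmκ x (hm K₀ h0)).1
  have hsumR : ∀ x, ∑ K₀, w K₀ * R x K₀ ≤ totalWeight w * (wdeg w x - 1) ^ 2 +
      2 * (wdeg w x - 1) * (codegSum w x - ∑ K₀, w K₀ * hitWeight w x K₀) +
      10 * m ^ 2 * B ^ 3 * κ := by
    intro x
    set H := ∑ K₀, w K₀ * hitWeight w x K₀ with hH
    set O := ∑ K₀, w K₀ * overlapWeight w x K₀ with hO
    have hH2 : H ≤ m * B * B := sum_mul_hitWeight_le hw hm hB hB0 x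
    have hO2 : O ≤ m * m * κ * B := sum_mul_overlapWeight_le hw hm hB hκ0 hκ x
    have hs2 : codegSum w x ≤ m * B := codegSum_le hw hm hB x
    have hH0 : 0 ≤ H := sum_nonneg fun K _ => mul_nonneg (hw K) (hitWeight_nonneg hw x K)
    have e1 : ∑ K₀, w K₀ * R x K₀ = totalWeight w * (wdeg w x - 1) ^ 2 +
        2 * (wdeg w x - 1) * (codegSum w x - H) + m * B * κ * (codegSum w x + H) +
        4 * B * (O + m / totalWeight w * H) := by
      have e2 : ∀ K₀, w K₀ * R x K₀ =
        w K₀ * ((wdeg w x - 1) ^ 2 + (2 * (wdeg w x - 1) + m * B * κ) *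
          (codegSum w x / totalWeight w)) +
        (w K₀ * hitWeight w x K₀) *
          (m * B * κ - 2 * (wdeg w x - 1) + 4 * B * (m / totalWeight w)) +
        (w K₀ * overlapWeight w x K₀) * (4 * B) := fun K₀ => by simp only [hR]; ring
      simp only [e2, sum_add_distrib, ← sum_mul]
      rw [← hH, ← hO, show ∑ K, w K = totalWeight w from rfl]
      field_simp
      ring
    rw [e1]
    have t1 : m * B * κ * (codegSum w x + H) ≤ m * B * κ * (m * B * B + m * B * B) := by
      gcongr
      refine hs2.trans ?_
      have : (m : ℝ) * B * 1 ≤ m * B * B := by gcongr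
      linarith
    have t2 : m / totalWeight w ≤ m * κ := by
      rw [div_le_iff₀ hW0, mul_assoc]
      exact le_mul_of_one_le_right (Nat.cast_nonneg m) hWκ
    have t3 : 4 * B * (O + m / totalWeight w * H) ≤
        4 * B * (m * m * κ * B * B + m * κ * (m * B * B)) := by
      gcongr
      refine hO2.trans ?_
      have : (m : ℝ) * m * κ * B * 1 ≤ m * m * κ * B * B := by gcongr
      linarith
    nlinarith
  calc _ ≤ ∑ K₀, ∑ x ∈ U, w K₀ * R x K₀ := sum_le_sum fun K₀ _ => step K₀
    _ = ∑ x ∈ U, ∑ K₀, w K₀ * R x K₀ := sum_comm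
    _ ≤ _ := sum_le_sum fun x _ => hsumR x
    _ ≤ _ := by
      rw [sum_add_distrib, sum_add_distrib, ← mul_sum, sum_const, nsmul_eq_mul]
      have := sum_cross_terms_le hw hm hU hB
      simp only [deviation] at this ⊢
      linarith

lemma sum_mul_totalWeight_reweight_le {m : ℕ} {B κ η : ℝ} {U : Finset X} (hw : ∀ K, 0 ≤ w K)
    (hm : ∀ K, w K ≠ 0 → #K ≤ m) (hU : ∀ K, w K ≠ 0 → K ⊆ U)
    (hW : 1 ≤ totalWeight w) (hκ : ∀ x y, x ≠ y → wcodeg w x y ≤ κ) (hκ0 : 0 ≤ κ)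
    (hB : ∀ x, wdeg w x ≤ B) (hη : 0 < η) :
    ∑ K₀, w K₀ * totalWeight (reweight w K₀) ≤
      totalWeight w * (totalWeight w - 1) + (η * #U + deviation U w / η) + κ * m * B * #U := by
  have hW0 : 0 < totalWeight w := by linarith
  have hdU : ∀ f : X → ℝ, ∑ x, wdeg w x * f x = ∑ x ∈ U, wdeg w x * f x := fun f => by
    symm
    exact sum_subset (subset_univ U) fun y _ hy => by simp [wdeg_eq_zero hU hy]
  have hsd : ∑ x, wdeg w x = ∑ x ∈ U, wdeg w x := by simpa using hdU (fun _ => 1)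
  have h1 : ∀ K₀, totalWeight (reweight w K₀) ≤ totalWeight w - ∑ x ∈ K₀, wdeg w x +
      ((∑ x ∈ U, wdeg w x) - totalWeight w) / totalWeight w +
      ∑ K, w K * #(K ∩ K₀).offDiag := by
    intro K₀
    have h2 : ∑ x ∈ K₀, wdeg w x = ∑ K, w K * #(K ∩ K₀) := by
      have := sum_mul_sum_mem (w := w) (fun x => if x ∈ K₀ then 1 else 0)
      simp only [mul_ite, mul_one, mul_zero] at this
      rw [sum_ite_mem, univ_inter] at this
      rw [← this]
      exact sum_congr rfl fun K _ => by simp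
    rw [h2, ← hsd, sum_wdeg]
    simp only [totalWeight] at hW0 ⊢
    rw [← sum_sub_distrib, ← sum_sub_distrib, sum_div, ← sum_add_distrib, ← sum_add_distrib]
    refine sum_le_sum fun K _ => ?_
    refine (reweight_bounds hw hm hW0 K₀ K).1.trans (le_of_eq ?_)
    simp only [totalWeight]
    ring
  have h3 : ∑ K₀, w K₀ * ∑ K, w K * (#(K ∩ K₀).offDiag : ℝ) ≤ κ * m * B * #U := by
    simp only [mul_sum]
    rw [sum_comm]
    calc _ = ∑ K, w K * ∑ p ∈ K.offDiag, wcodeg w p.1 p.2 := by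
          refine sum_congr rfl fun K _ => ?_
          rw [← sum_mul_card_offDiag_inter, mul_sum]
          exact sum_congr rfl fun _ _ => by ring
      _ ≤ ∑ K, w K * (m * #K * κ) := by
          refine sum_le_sum fun K _ => ?_
          by_cases h0 : w K = 0
          · simp [h0]
          exact mul_le_mul_of_nonneg_left (sum_offDiag_wcodeg_le hκ0 hκ (hm K h0)) (hw K)
      _ = κ * m * ∑ x ∈ U, wdeg w x := by
          rw [← hsd, sum_wdeg, mul_sum]
          exact sum_congr rfl fun _ _ => by ring
      _ ≤ κ * m * ∑ x ∈ U, B := by gcongr with x; exact hB x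
      _ = _ := by simp; ring
  have h4 : ∑ x ∈ U, wdeg w x - ∑ x ∈ U, wdeg w x * wdeg w x ≤
      η * #U + deviation U w / η := by
    rw [deviation, ← sum_sub_distrib, sum_div, mul_comm η, ← nsmul_eq_mul, ← sum_const,
      ← sum_add_distrib]
    refine sum_le_sum fun x _ => ?_
    set e := wdeg w x - 1 with he
    rw [show wdeg w x = e + 1 by rw [he]; ring]
    have : -e ≤ η + e ^ 2 / η := by
      rw [← sub_nonneg, show η + e ^ 2 / η - -e = (η ^ 2 + e ^ 2 + e * η) / η by field_simp; ring]
      refine div_nonneg ?_ hη.le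
      nlinarith [sq_nonneg (η + e), sq_nonneg e, sq_nonneg η]
    nlinarith [sq_nonneg e]
  calc _ ≤ ∑ K₀, w K₀ * (totalWeight w - ∑ x ∈ K₀, wdeg w x +
      ((∑ x ∈ U, wdeg w x) - totalWeight w) / totalWeight w +
      ∑ K, w K * #(K ∩ K₀).offDiag) := sum_le_sum fun K _ => mul_le_mul_of_nonneg_left (h1 K) (hw K)
    _ = totalWeight w * (totalWeight w + ((∑ x ∈ U, wdeg w x) - totalWeight w) / totalWeight w)
        - ∑ x ∈ U, wdeg w x * wdeg w x + ∑ K₀, w K₀ * ∑ K, w K * (#(K ∩ K₀).offDiag : ℝ) := by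
      rw [← hdU, ← sum_mul_sum_mem, show totalWeight w * (totalWeight w +
        ((∑ x ∈ U, wdeg w x) - totalWeight w) / totalWeight w) = ∑ K, w K * (totalWeight w +
        ((∑ x ∈ U, wdeg w x) - totalWeight w) / totalWeight w) by rw [← sum_mul]; rfl,
        ← sum_sub_distrib, ← sum_add_distrib]
      exact sum_congr rfl fun _ _ => by ring
    _ ≤ _ := by
      have : totalWeight w * (totalWeight w +
          ((∑ x ∈ U, wdeg w x) - totalWeight w) / totalWeight w) =
          totalWeight w * (totalWeight w - 1) + ∑ x ∈ U, wdeg w x := by field_simp; ring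
      linarith

lemma exists_good_hyperedge {m : ℕ} {B κ η l : ℝ} {U : Finset X} (hw : ∀ K, 0 ≤ w K)
    (hm : ∀ K, w K ≠ 0 → #K ≤ m) (hU : ∀ K, w K ≠ 0 → K ⊆ U)
    (hW : 1 ≤ totalWeight w) (hκ : ∀ x y, x ≠ y → wcodeg w x y ≤ κ) (hκ0 : 0 ≤ κ)
    (hB : ∀ x, wdeg w x ≤ B) (hB1 : 1 ≤ B) (hWκ : 1 ≤ κ * totalWeight w)
    (hmκ : m * B * κ ≤ 1) (hη : 0 < η) (hl : 0 ≤ l) :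
    ∃ K₀, w K₀ ≠ 0 ∧ totalWeight (reweight w K₀) + l * deviation (U \ K₀) (reweight w K₀) ≤
      totalWeight w - 1 + (η * #U + deviation U w / η + κ * m * B * #U +
        l * (2 * m * B * deviation U w + 10 * m ^ 2 * B ^ 3 * κ * #U)) / totalWeight w +
      l * deviation U w := by
  have hW0 : 0 < totalWeight w := by linarith
  by_contra! hcon
  set R := totalWeight w - 1 + (η * #U + deviation U w / η + κ * m * B * #U +
        l * (2 * m * B * deviation U w + 10 * m ^ 2 * B ^ 3 * κ * #U)) / totalWeight w +
      l * deviation U w with hR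
  have h1 := sum_mul_deviation_le hw hm hU hW hκ hκ0 hB hB1 hWκ hmκ
  have h2 := sum_mul_totalWeight_reweight_le hw hm hU hW hκ hκ0 hB hη
  have h3 : ∑ K₀, w K₀ * R < ∑ K₀, w K₀ * (totalWeight (reweight w K₀) +
      l * deviation (U \ K₀) (reweight w K₀)) := by
    refine sum_lt_sum (fun K _ => ?_) ?_
    · by_cases h0 : w K = 0
      · simp [h0]
      · exact mul_le_mul_of_nonneg_left (hcon K h0).le (hw K)
    · obtain ⟨K, hK, h⟩ := exists_ne_zero_of_sum_ne_zero (ne_of_gt hW0)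
      exact ⟨K, mem_univ K, mul_lt_mul_of_pos_left (hcon K h) (lt_of_le_of_ne (hw K) (Ne.symm h))⟩
  have h4 : ∑ K₀, w K₀ * R = totalWeight w * (totalWeight w - 1) +
      (η * #U + deviation U w / η + κ * m * B * #U +
        l * (2 * m * B * deviation U w + 10 * m ^ 2 * B ^ 3 * κ * #U)) +
      totalWeight w * (l * deviation U w) := by
    rw [← sum_mul, show ∑ K, w K = totalWeight w from rfl, hR]
    field_simp
  have h5 : ∑ K₀, w K₀ * (totalWeight (reweight w K₀) +
      l * deviation (U \ K₀) (reweight w K₀)) = ∑ K₀, w K₀ * totalWeight (reweight w K₀) +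
      l * ∑ K₀, w K₀ * deviation (U \ K₀) (reweight w K₀) := by
    rw [mul_sum, ← sum_add_distrib]
    exact sum_congr rfl fun _ _ => by ring
  rw [h4, h5] at h3
  have h6 := mul_le_mul_of_nonneg_left h1 hl
  linarith

/-- `v` is a nonnegative weighting of hyperedges of `w` that avoid the points covered by `C`, with
degrees at most `B` and codegrees at most `κ`. -/
structure IsResidual (w : Finset X → ℝ) (U : Finset X) (C : Finset (Finset X))
    (B κ : ℝ) (v : Finset X → ℝ) : Prop where
  family : ∀ K ∈ C, w K ≠ 0
  nonneg : ∀ K, 0 ≤ v K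
  supp : ∀ K, v K ≠ 0 → w K ≠ 0
  sub : ∀ K, v K ≠ 0 → K ⊆ U \ C.biUnion id
  wdeg_le : ∀ x, wdeg v x ≤ B
  wcodeg_le : ∀ x y, x ≠ y → wcodeg v x y ≤ κ

lemma deviation_nonneg (U : Finset X) (w : Finset X → ℝ) : 0 ≤ deviation U w :=
  sum_nonneg fun _ _ => sq_nonneg _

lemma totalWeight_nonneg (hw : ∀ K, 0 ≤ w K) : 0 ≤ totalWeight w := sum_nonneg fun K _ => hw K

lemma sum_wdeg_le {m : ℕ} (hw : ∀ K, 0 ≤ w K) (hm : ∀ K, w K ≠ 0 → #K ≤ m) (U : Finset X) :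
    ∑ x ∈ U, wdeg w x ≤ m * totalWeight w := by
  calc _ ≤ ∑ x, wdeg w x :=
        sum_le_sum_of_subset_of_nonneg (subset_univ _) fun x _ _ => wdeg_nonneg hw x
    _ = ∑ K, w K * #K := sum_wdeg
    _ ≤ ∑ K, w K * m := by
      refine sum_le_sum fun K _ => ?_
      by_cases h0 : w K = 0
      · simp [h0]
      · exact mul_le_mul_of_nonneg_left (by exact_mod_cast hm K h0) (hw K)
    _ = _ := by rw [← sum_mul, mul_comm]; rfl

lemma card_le_mul_totalWeight {m : ℕ} {U : Finset X} (hw : ∀ K, 0 ≤ w K)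
    (hm : ∀ K, w K ≠ 0 → #K ≤ m) (hdeg : ∀ x ∈ U, wdeg w x = 1) :
    (#U : ℝ) ≤ m * totalWeight w := by
  refine le_trans (le_of_eq ?_) (sum_wdeg_le hw hm U)
  rw [sum_congr rfl hdeg]; simp

lemma IsResidual.step {m : ℕ} {U : Finset X} {C : Finset (Finset X)} {B κ q : ℝ}
    {v : Finset X → ℝ} (h : IsResidual w U C B κ v) (hm : ∀ K, w K ≠ 0 → #K ≤ m)
    (hW : 1 ≤ totalWeight v) (hq : 1 + m / totalWeight v ≤ q)
    {K₀ : Finset X} (hK : v K₀ ≠ 0) :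
    IsResidual w U (insert K₀ C) (q * B) (q * κ) (reweight v K₀) := by
  have hm' : ∀ K, v K ≠ 0 → #K ≤ m := fun K hK => hm K (h.supp K hK)
  have hle : ∀ K, reweight v K₀ K ≤ q * v K := fun K =>
    (reweight_le h.nonneg hm' hW K₀ K).trans (mul_le_mul_of_nonneg_right hq (h.nonneg K))
  have hq0 : 0 ≤ q := le_trans (by positivity) hq
  refine ⟨fun K hK' => ?_, reweight_nonneg h.nonneg hW K₀, fun K hK' => ?_, fun K hK' => ?_,
    fun x => ?_, fun x y hxy => ?_⟩
  · rcases mem_insert.1 hK' with rfl | hK'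
    · exact h.supp _ hK
    · exact h.family K hK'
  · exact h.supp K (reweight_ne_zero hK').1
  · obtain ⟨h1, h2⟩ := reweight_ne_zero hK'
    have h3 := h.sub K h1
    rw [biUnion_insert, id, sdiff_union_distrib]
    intro x hx
    have := h3 hx
    have h4 : x ∉ K₀ := disjoint_left.1 h2 hx
    simp only [mem_inter, mem_sdiff] at this ⊢
    tauto
  · exact (wdeg_mono hle x).trans (mul_le_mul_of_nonneg_left (h.wdeg_le x) hq0)
  · exact (wcodeg_mono hle x y).trans (mul_le_mul_of_nonneg_left (h.wcodeg_le x y hxy) hq0)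

lemma exists_residual_of_small_weight {m N : ℕ} {δ κ κ' B η Λ : ℝ} {lam : ℕ → ℝ} {U : Finset X}
    (hw : ∀ K, 0 ≤ w K) (hm : ∀ K, w K ≠ 0 → #K ≤ m) (hU : ∀ K, w K ≠ 0 → K ⊆ U)
    (hdeg : ∀ x ∈ U, wdeg w x = 1) (hκ0 : 0 ≤ κ) (hcodeg : ∀ x y, x ≠ y → wcodeg w x y ≤ κ)
    (hδ : 0 < δ) (hη : 0 < η) (hδM : 1 ≤ δ * totalWeight w)
    (hqB : (1 + m / (δ * totalWeight w)) ^ N ≤ B) (hκB : κ * B ≤ κ')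
    (hκM : 1 ≤ κ' * (δ * totalWeight w)) (hmκ : m * B * κ' ≤ 1)
    (hlam0 : ∀ i ≤ N, 0 ≤ lam i) (hlamΛ : ∀ i ≤ N, lam i ≤ Λ)
    (hlam : ∀ i < N, lam (i + 1) * (1 + 2 * m * B / (δ * totalWeight w)) +
      1 / (η * (δ * totalWeight w)) ≤ lam i)
    (herr : m / δ * (η + κ' * m * B + Λ * (10 * m ^ 2 * B ^ 3 * κ')) ≤ δ)
    (hN : totalWeight w < (1 - δ) * N) :
    ∃ i ≤ N, ∃ (C : Finset (Finset X)) (v : Finset X → ℝ), #C ≤ i ∧ IsResidual w U C B κ' v ∧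
      totalWeight v + lam i * deviation (U \ C.biUnion id) v ≤ totalWeight w - (1 - δ) * i ∧
      totalWeight v ≤ δ * totalWeight w := by
  set M := totalWeight w with hM
  set q : ℝ := 1 + m / (δ * M) with hq
  have hδM0 : 0 < δ * M := by linarith
  have hM0 : 0 < M := pos_of_mul_pos_right hδM0 hδ.le
  have hq1 : 1 ≤ q := by rw [hq]; linarith [show (0 : ℝ) ≤ m / (δ * M) by positivity]
  have hB1 : 1 ≤ B := (one_le_pow₀ hq1).trans hqB
  have hκ'0 : 0 ≤ κ' := le_trans (by positivity) hκB
  have hqi : ∀ i ≤ N, q ^ i ≤ B := fun i hi => (pow_le_pow_right₀ hq1 hi).trans hqB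
  have hκi : ∀ i ≤ N, κ * q ^ i ≤ κ' := fun i hi =>
    (mul_le_mul_of_nonneg_left (hqi i hi) hκ0).trans hκB
  have weaken : ∀ i ≤ N, ∀ C v, IsResidual w U C (q ^ i) (κ * q ^ i) v → IsResidual w U C B κ' v :=
    fun i hi C v h => { h with
      wdeg_le := fun x => (h.wdeg_le x).trans (hqi i hi)
      wcodeg_le := fun x y hxy => (h.wcodeg_le x y hxy).trans (hκi i hi) }
  by_contra! hcon
  have key : ∀ i ≤ N, ∃ (C : Finset (Finset X)) (v : Finset X → ℝ), #C ≤ i ∧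
      IsResidual w U C (q ^ i) (κ * q ^ i) v ∧
      totalWeight v + lam i * deviation (U \ C.biUnion id) v ≤ M - (1 - δ) * i := by
    intro i
    induction i with
    | zero =>
      intro _
      refine ⟨∅, w, by simp, ⟨by simp, hw, fun _ h => h, by simpa using hU, fun x => ?_, ?_⟩, ?_⟩
      · by_cases hx : x ∈ U
        · simp [hdeg x hx]
        · simp [wdeg_eq_zero hU hx]
      · simpa using hcodeg
      · have : deviation U w = 0 := sum_eq_zero fun x hx => by simp [hdeg x hx]
        simp [this, hM]
    | succ i ih =>
      intro hi
      obtain ⟨C, v, hC, hr, hJ⟩ := ih (by omega)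
      have hrB := weaken i (by omega) C v hr
      have hWv : δ * M < totalWeight v := hcon i (by omega) C v hC hrB hJ
      have hW1 : 1 ≤ totalWeight v := by linarith
      have hW0 : 0 < totalWeight v := by linarith
      have hmv : ∀ K, v K ≠ 0 → #K ≤ m := fun K hK => hm K (hr.supp K hK)
      have hl0 := hlam0 (i + 1) hi
      obtain ⟨K₀, hK₀, hstep⟩ := exists_good_hyperedge (η := η) (l := lam (i + 1)) hr.nonneg hmv
        hr.sub hW1 hrB.wcodeg_le hκ'0 hrB.wdeg_le hB1
        (hκM.trans (mul_le_mul_of_nonneg_left hWv.le hκ'0)) hmκ hη hl0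
      refine ⟨insert K₀ C, reweight v K₀, (card_insert_le _ _).trans (by omega), ?_, ?_⟩
      · have := hr.step hm hW1 (q := q) (by rw [hq]; gcongr) hK₀
        convert this using 1 <;> ring
      · set U' := U \ C.biUnion id with hU'
        have hUU : U \ (insert K₀ C).biUnion id = U' \ K₀ := by
          rw [biUnion_insert, id, hU', union_comm, sdiff_sdiff_left]; rfl
        rw [hUU]
        refine hstep.trans ?_
        have hcard : (#U' : ℝ) ≤ m * M := by
          refine le_trans ?_ (card_le_mul_totalWeight hw hm hdeg)
          exact_mod_cast card_le_card sdiff_subset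
        have hΦ := deviation_nonneg U' v
        set Φ := deviation U' v
        have hl2 := hlamΛ (i + 1) hi
        set l := lam (i + 1)
        have hΛ0 : 0 ≤ Λ := hl0.trans hl2
        have e1 : (η * #U' + Φ / η + κ' * m * B * #U' +
            l * (2 * m * B * Φ + 10 * m ^ 2 * B ^ 3 * κ' * #U')) / totalWeight v ≤
            (η * (m * M) + Φ / η + κ' * m * B * (m * M) +
            l * (2 * m * B * Φ) + Λ * (10 * m ^ 2 * B ^ 3 * κ' * (m * M))) / (δ * M) := by
          rw [mul_add l, ← add_assoc]
          have hΦη : 0 ≤ Φ / η := by positivity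
          gcongr
        have e2 : (η * (m * M) + Φ / η + κ' * m * B * (m * M) +
            l * (2 * m * B * Φ) + Λ * (10 * m ^ 2 * B ^ 3 * κ' * (m * M))) / (δ * M) =
            m / δ * (η + κ' * m * B + Λ * (10 * m ^ 2 * B ^ 3 * κ')) +
            (l * (1 + 2 * m * B / (δ * M)) + 1 / (η * (δ * M))) * Φ - l * Φ := by
          field_simp
          ring
        have e3 := mul_le_mul_of_nonneg_right (hlam i (by omega)) hΦ
        push_cast
        linarith
  obtain ⟨C, v, -, hr, hJ⟩ := key N le_rfl
  have h1 := totalWeight_nonneg hr.nonneg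
  have h2 := mul_nonneg (hlam0 N le_rfl) (deviation_nonneg (U \ C.biUnion id) v)
  linarith

lemma card_le_of_deviation {m : ℕ} {U : Finset X} (hw : ∀ K, 0 ≤ w K)
    (hm : ∀ K, w K ≠ 0 → #K ≤ m) :
    (#U : ℝ) ≤ 2 * m * totalWeight w + 4 * deviation U w := by
  have h1 : (#U : ℝ) ≤ ∑ x ∈ U, (2 * wdeg w x + 4 * (wdeg w x - 1) ^ 2) := by
    rw [card_eq_sum_ones]; push_cast
    refine sum_le_sum fun x _ => ?_
    nlinarith [sq_nonneg (4 * wdeg w x - 3)]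
  have h2 := sum_wdeg_le hw hm U
  rw [sum_add_distrib, ← mul_sum, ← mul_sum] at h1
  rw [deviation]
  linarith



/-- **Nibble for covers.** A weighting of bounded-size hyperedges with all degrees `1` and small
codegrees is rounded to a cover whose size is close to the total weight. -/
theorem exists_cover_of_small_codegree (m : ℕ) (hm1 : 1 ≤ m) (ε : ℝ) (hε : 0 < ε) :
    ∃ κ : ℝ, 0 < κ ∧ ∀ (X : Type) [Fintype X] [DecidableEq X] (w : Finset X → ℝ) (U : Finset X),
      (∀ K, 0 ≤ w K) → (∀ K, w K ≠ 0 → #K ≤ m) → (∀ K, w K ≠ 0 → K ⊆ U) →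
      (∀ x ∈ U, wdeg w x = 1) → (∀ x y, x ≠ y → wcodeg w x y ≤ κ) → 1 ≤ κ * totalWeight w →
      ∃ C : Finset (Finset X), (∀ K ∈ C, w K ≠ 0) ∧
        (#C : ℝ) + #(U \ C.biUnion id) ≤ (1 + ε) * totalWeight w := by
  have hm0 : (1 : ℝ) ≤ m := by exact_mod_cast hm1
  obtain ⟨δ, hδ0, hδ2, hδε⟩ : ∃ δ : ℝ, 0 < δ ∧ δ ≤ 1 / 3 ∧ (2 * m + 6) * δ ≤ ε := by
    refine ⟨min (1 / 3) (ε / (2 * m + 6)), by positivity, min_le_left _ _, ?_⟩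
    calc _ ≤ (2 * m + 6) * (ε / (2 * m + 6)) := by gcongr; exact min_le_right _ _
      _ = ε := by field_simp
  set B : ℝ := Real.exp (3 * m / δ) with hB
  set η : ℝ := δ ^ 2 / (2 * m) with hη
  have hη0 : 0 < η := by positivity
  have hB0 : 0 < B := Real.exp_pos _
  set A : ℝ := (2 * m * B + 1 / η) / δ with hA
  have hA0 : 0 < A := by positivity
  set Λ : ℝ := Real.exp (3 * A) / δ with hΛ
  have hΛ0 : 0 < Λ := by positivity
  obtain ⟨κ', hκ'0, hκ'1, hκ'2⟩ : ∃ κ' : ℝ, 0 < κ' ∧ m * B * κ' ≤ 1 ∧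
      m / δ * (m * B + Λ * (10 * m ^ 2 * B ^ 3)) * κ' ≤ δ / 2 := by
    set P := m / δ * (m * B + Λ * (10 * m ^ 2 * B ^ 3)) with hP
    have hP0 : 0 < P := by positivity
    refine ⟨min (1 / (m * B)) (δ / 2 / P), by positivity, ?_, ?_⟩
    · calc _ ≤ m * B * (1 / (m * B)) := by gcongr; exact min_le_left _ _
        _ = 1 := by field_simp
    · calc _ ≤ P * (δ / 2 / P) := by gcongr; exact min_le_right _ _
        _ = _ := by field_simp
  refine ⟨min (κ' / B) (min (κ' * δ) δ), by positivity, ?_⟩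
  intro X _ _ w U hw hm hU hdeg hcodeg hκM
  set κ := min (κ' / B) (min (κ' * δ) δ) with hκ
  have hκ0 : 0 < κ := by positivity
  set M := totalWeight w with hM
  have hM0 : 0 < M := pos_of_mul_pos_right (by linarith) hκ0.le
  have hδM : 1 ≤ δ * M := hκM.trans (by
    gcongr; exact (min_le_right _ _).trans (min_le_right _ _))
  have hM3 : 3 ≤ M := by nlinarith
  set N : ℕ := ⌊2 * M⌋₊ + 1 with hN
  have hN1 : 2 * M < N := by rw [hN]; push_cast; exact Nat.lt_floor_add_one _
  have hN2 : (N : ℝ) ≤ 3 * M := by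
    rw [hN]; push_cast
    linarith [Nat.floor_le (show 0 ≤ 2 * M by linarith)]
  have hpow : ∀ a : ℝ, 0 ≤ a → ∀ i ≤ N, (1 + a / M) ^ i ≤ Real.exp (3 * a) := by
    intro a ha i hi
    calc (1 + a / M) ^ i ≤ (Real.exp (a / M)) ^ i := by
          gcongr; linarith [Real.add_one_le_exp (a / M)]
      _ = Real.exp (i * (a / M)) := by rw [Real.exp_nat_mul]
      _ ≤ _ := by
        refine Real.exp_le_exp.2 ?_
        have : (i : ℝ) ≤ 3 * M := le_trans (by exact_mod_cast hi) hN2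
        calc _ ≤ 3 * M * (a / M) := by gcongr
          _ = _ := by field_simp
  obtain ⟨i, hi, C, v, hC, hr, hJ, hsmall⟩ := exists_residual_of_small_weight (m := m) (N := N)
    (δ := δ) (κ := κ) (κ' := κ') (B := B) (η := η) (Λ := Λ)
    (lam := fun i => (1 + A / M) ^ (N - i) / δ) hw hm hU hdeg hκ0.le hcodeg hδ0 hη0 hδM
    (by
      have := hpow (m / δ) (by positivity) N le_rfl
      rw [div_div] at this
      rw [hB, mul_div_assoc]; exact this)
    (by
      calc κ * B ≤ κ' / B * B := by gcongr; exact min_le_left _ _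
        _ = κ' := by field_simp)
    (by
      refine hκM.trans ?_
      rw [← mul_assoc]
      gcongr; exact (min_le_right _ _).trans (min_le_left _ _))
    hκ'1
    (fun i _ => by positivity)
    (fun i _ => by
      rw [hΛ]; gcongr; exact hpow A hA0.le (N - i) (Nat.sub_le _ _))
    (fun i hi => by
      have e1 : N - i = (N - (i + 1)) + 1 := by omega
      simp only [e1, pow_succ]
      set p := (1 + A / M) ^ (N - (i + 1)) with hp
      have hp1 : 1 ≤ p := one_le_pow₀ (by linarith [show 0 ≤ A / M by positivity])
      have hpd : 1 ≤ p / δ := by rw [one_le_div hδ0]; linarith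
      have e2 : p * (1 + A / M) / δ = p / δ * (1 + 2 * m * B / (δ * M)) +
          p / δ * (1 / (η * (δ * M))) := by
        rw [hA]; field_simp
        ring
      rw [e2]
      have : 0 ≤ 1 / (η * (δ * M)) := by positivity
      have := le_mul_of_one_le_left this hpd
      linarith)
    (by
      have e1 : m / δ * η = δ / 2 := by rw [hη]; field_simp
      have e2 : m / δ * (η + κ' * m * B + Λ * (10 * m ^ 2 * B ^ 3 * κ')) =
        m / δ * η + m / δ * (m * B + Λ * (10 * m ^ 2 * B ^ 3)) * κ' := by ring
      rw [e2, e1]; linarith)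
    (by nlinarith)
  refine ⟨C, hr.family, ?_⟩
  have hleft := card_le_of_deviation (U := U \ C.biUnion id) hr.nonneg
    (fun K hK => hm K (hr.supp K hK))
  have hW0 := totalWeight_nonneg hr.nonneg
  have hΦ0 := deviation_nonneg (U \ C.biUnion id) v
  set Φ := deviation (U \ C.biUnion id) v
  have hl : 1 / δ ≤ (1 + A / M) ^ (N - i) / δ := by
    gcongr; exact one_le_pow₀ (by linarith [show 0 ≤ A / M by positivity])
  have hlΦ := mul_le_mul_of_nonneg_right hl hΦ0
  have hi0 : 0 ≤ (1 - δ) * (i : ℝ) := mul_nonneg (by linarith) (Nat.cast_nonneg i)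
  have hΦ : Φ ≤ δ * M := by
    have : 1 / δ * Φ ≤ M := by linarith
    rw [div_mul_eq_mul_div, one_mul, div_le_iff₀ hδ0] at this
    linarith
  have hiM : (i : ℝ) ≤ (1 + 2 * δ) * M := by
    have h1 : (1 - δ) * (i : ℝ) ≤ M := by
      have : 0 ≤ (1 + A / M) ^ (N - i) / δ * Φ := by positivity
      linarith
    have h2 : (1 - δ) * (i : ℝ) ≤ (1 - δ) * ((1 + 2 * δ) * M) := by nlinarith [mul_nonneg hδ0.le hM0.le]
    exact le_of_mul_le_mul_left h2 (by linarith)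
  have hCi : (#C : ℝ) ≤ i := by exact_mod_cast hC
  have h5 : 2 * m * totalWeight v ≤ 2 * m * (δ * M) := by gcongr
  have h6 := mul_le_mul_of_nonneg_right hδε hM0.le
  linarith

/-- Remove `x` from a proportion `1 - p` of the hyperedges containing it. -/
noncomputable def thin (w : Finset X → ℝ) (x : X) (p : ℝ) : Finset X → ℝ := fun K =>
  if x ∈ K then p * w K else w K + (1 - p) * w (insert x K)

lemma sum_thin_mul (x : X) (p : ℝ) (g : Finset X → ℝ) :
    ∑ K, thin w x p K * g K =
      ∑ K, if x ∈ K then w K * (p * g K + (1 - p) * g (K.erase x)) else w K * g K := by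
  have h1 : ∑ K with x ∉ K, w (insert x K) * g K = ∑ K with x ∈ K, w K * g (K.erase x) := by
    refine sum_bij' (fun K _ => insert x K) (fun K _ => K.erase x) ?_ ?_ ?_ ?_ ?_
    · simp
    · simp
    · intro K hK; exact erase_insert (by simpa using hK)
    · intro K hK; exact insert_erase (by simpa using hK)
    · intro K hK; rw [erase_insert (by simpa using hK)]
  rw [sum_ite, ← sum_filter_add_sum_filter_not univ (fun K => x ∈ K) (fun K => thin w x p K * g K)]
  have h2 : ∑ K with x ∈ K, thin w x p K * g K = ∑ K with x ∈ K, w K * (p * g K) :=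
    sum_congr rfl fun K hK => by rw [thin, if_pos (by simpa using hK)]; ring
  have h3 : ∑ K with x ∉ K, thin w x p K * g K =
      ∑ K with x ∉ K, w K * g K + (1 - p) * ∑ K with x ∉ K, w (insert x K) * g K := by
    rw [mul_sum, ← sum_add_distrib]
    exact sum_congr rfl fun K hK => by rw [thin, if_neg (by simpa using hK)]; ring
  rw [h2, h3, h1]
  simp only [mul_add, sum_add_distrib, mul_sum]
  rw [add_comm (∑ K with x ∉ K, w K * g K), ← add_assoc]
  congr 2
  exact sum_congr rfl fun K _ => by ring

lemma thin_nonneg (hw : ∀ K, 0 ≤ w K) {p : ℝ} (hp0 : 0 ≤ p) (hp1 : p ≤ 1) (x : X)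
    (K : Finset X) : 0 ≤ thin w x p K := by
  rw [thin]
  split_ifs
  · exact mul_nonneg hp0 (hw K)
  · exact add_nonneg (hw K) (mul_nonneg (by linarith) (hw _))

lemma totalWeight_thin (x : X) (p : ℝ) : totalWeight (thin w x p) = totalWeight w := by
  have := sum_thin_mul (w := w) x p (fun _ => 1)
  simp only [mul_one] at this
  rw [totalWeight, this]
  exact sum_congr rfl fun K _ => by split_ifs <;> ring

lemma wdeg_eq_sum_mul (x : X) : wdeg w x = ∑ K, w K * if x ∈ K then 1 else 0 := by
  simp [wdeg]

lemma wdeg_thin_self (x : X) (p : ℝ) : wdeg (thin w x p) x = p * wdeg w x := by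
  rw [wdeg_eq_sum_mul, sum_thin_mul, wdeg, mul_sum]
  exact sum_congr rfl fun K _ => by by_cases h : x ∈ K <;> simp [h, mul_comm]

lemma wdeg_thin_of_ne {x y : X} (hxy : y ≠ x) (p : ℝ) : wdeg (thin w x p) y = wdeg w y := by
  rw [wdeg_eq_sum_mul, sum_thin_mul, wdeg]
  exact sum_congr rfl fun K _ => by by_cases h : x ∈ K <;> by_cases h' : y ∈ K <;> simp [h, h', hxy]

lemma wcodeg_thin_le (hw : ∀ K, 0 ≤ w K) {p : ℝ} (hp1 : p ≤ 1) (x y z : X) :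
    wcodeg (thin w x p) y z ≤ wcodeg w y z := by
  have : wcodeg (thin w x p) y z = ∑ K, thin w x p K * if y ∈ K ∧ z ∈ K then 1 else 0 := by
    simp [wcodeg]
  rw [this, sum_thin_mul, wcodeg]
  refine sum_le_sum fun K _ => ?_
  have hK := hw K
  have h1 : 0 ≤ 1 - p := by linarith
  by_cases hyz : y ∈ K ∧ z ∈ K
  · simp only [hyz, and_self, if_true, mem_erase, and_true]
    split_ifs <;> nlinarith
  · have : ¬ (y ∈ K.erase x ∧ z ∈ K.erase x) := fun h =>
      hyz ⟨mem_of_mem_erase h.1, mem_of_mem_erase h.2⟩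
    simp only [if_neg hyz, if_neg this]
    simp

/-- A weighting with all degrees at least `1` can be thinned to one with all degrees exactly `1`,
keeping the total weight. -/
lemma exists_thinning {P : Finset X → Prop} (hP : ∀ K L, K ⊆ L → P L → P K) {κ : ℝ}
    (hw : ∀ K, 0 ≤ w K) (hwP : ∀ K, w K ≠ 0 → P K)
    (hκ : ∀ x y, x ≠ y → wcodeg w x y ≤ κ) (U : Finset X) (hU : ∀ x ∈ U, 1 ≤ wdeg w x) :
    ∃ v : Finset X → ℝ, (∀ K, 0 ≤ v K) ∧ (∀ K, v K ≠ 0 → P K) ∧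
      (∀ x y, x ≠ y → wcodeg v x y ≤ κ) ∧ totalWeight v = totalWeight w ∧
      (∀ x ∈ U, wdeg v x = 1) ∧ ∀ x ∉ U, wdeg v x = wdeg w x := by
  induction U using Finset.induction_on with
  | empty => exact ⟨w, hw, hwP, hκ, rfl, by simp, by simp⟩
  | insert a S ha ih =>
    obtain ⟨v, hv0, hvP, hvκ, hvW, hvS, hvS'⟩ := ih fun x hx => hU x (mem_insert_of_mem hx)
    have hd : 1 ≤ wdeg v a := by rw [hvS' a ha]; exact hU a (mem_insert_self _ _)
    have hp0 : 0 ≤ (wdeg v a)⁻¹ := by positivity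
    have hp1 : (wdeg v a)⁻¹ ≤ 1 := inv_le_one_of_one_le₀ hd
    refine ⟨thin v a (wdeg v a)⁻¹, thin_nonneg hv0 hp0 hp1 a, fun K hK => ?_, fun x y hxy =>
      (wcodeg_thin_le hv0 hp1 a x y).trans (hvκ x y hxy), by rw [totalWeight_thin, hvW],
      fun x hx => ?_, fun x hx => ?_⟩
    · rw [thin] at hK
      split_ifs at hK
      · exact hvP K (right_ne_zero_of_mul hK)
      · by_cases h0 : v K = 0
        · rw [h0, zero_add] at hK
          exact hP _ _ (subset_insert a K) (hvP _ (right_ne_zero_of_mul hK))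
        · exact hvP K h0
    · by_cases hxa : x = a
      · subst hxa
        rw [wdeg_thin_self, inv_mul_cancel₀ (by linarith)]
      · rw [wdeg_thin_of_ne hxa]
        exact hvS x ((mem_insert.1 hx).resolve_left hxa)
    · rw [mem_insert, not_or] at hx
      rw [wdeg_thin_of_ne hx.1, hvS' x hx.2]

end WeightedHypergraph

/-- Lower bounds for the performance of the `k`-step random greedy clique on sets of size `t`. -/
noncomputable def greedyRatio : ℕ → ℕ → ℝ
  | _, 0 => 1
  | 0, _ + 1 => 0
  | k + 1, t + 1 => greedyRatio k (t + 1) +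
      ((t : ℝ) / (t + 1)) ^ t * (greedyRatio k t - greedyRatio k (t + 1))

lemma greedyRatio_zero_right (k : ℕ) : greedyRatio k 0 = 1 := by cases k <;> rfl

lemma greedyRatio_coeff_mem (t : ℕ) :
    0 < ((t : ℝ) / (t + 1)) ^ t ∧ ((t : ℝ) / (t + 1)) ^ t ≤ 1 := by
  constructor
  · rcases Nat.eq_zero_or_pos t with rfl | h
    · simp
    · positivity
  · refine pow_le_one₀ (by positivity) ?_
    rw [div_le_one (by positivity)]; linarith

lemma greedyRatio_succ_right_le (k t : ℕ) : greedyRatio k (t + 1) ≤ greedyRatio k t := by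
  induction k generalizing t with
  | zero => cases t <;> simp [greedyRatio]
  | succ k ih =>
    obtain ⟨h0, h1⟩ := greedyRatio_coeff_mem t
    have h2 : greedyRatio (k + 1) (t + 1) ≤ greedyRatio k t := by
      rw [greedyRatio]; nlinarith [ih t]
    refine h2.trans ?_
    cases t with
    | zero => simp [greedyRatio_zero_right]
    | succ t =>
      obtain ⟨h0, h1⟩ := greedyRatio_coeff_mem t
      rw [greedyRatio]; nlinarith [ih t]

lemma greedyRatio_le_succ_left (k t : ℕ) : greedyRatio k t ≤ greedyRatio (k + 1) t := by
  cases t with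
  | zero => simp [greedyRatio_zero_right]
  | succ t =>
    rw [greedyRatio]
    nlinarith [greedyRatio_succ_right_le k t, (greedyRatio_coeff_mem t).1]

lemma greedyRatio_le_one (k t : ℕ) : greedyRatio k t ≤ 1 := by
  induction t with
  | zero => simp [greedyRatio_zero_right]
  | succ t ih => exact (greedyRatio_succ_right_le k t).trans ih

lemma greedyRatio_nonneg (k t : ℕ) : 0 ≤ greedyRatio k t := by
  induction k with
  | zero => cases t <;> simp [greedyRatio]
  | succ k ih => exact ih.trans (greedyRatio_le_succ_left k t)

lemma tendsto_greedyRatio (t : ℕ) :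
    Filter.Tendsto (fun k => greedyRatio k t) Filter.atTop (nhds 1) := by
  induction t with
  | zero => simp [greedyRatio_zero_right]
  | succ t ih =>
    have hmono : Monotone fun k => greedyRatio k (t + 1) :=
      monotone_nat_of_le_succ fun k => greedyRatio_le_succ_left k (t + 1)
    have hbdd : BddAbove (Set.range fun k => greedyRatio k (t + 1)) :=
      ⟨1, by rintro _ ⟨k, rfl⟩; exact greedyRatio_le_one _ _⟩
    have hL := tendsto_atTop_ciSup hmono hbdd
    set L := ⨆ k, greedyRatio k (t + 1)
    have h1 := hL.comp (Filter.tendsto_add_atTop_nat 1)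
    have h2 := hL.add ((ih.sub hL).const_mul (((t : ℝ) / (t + 1)) ^ t))
    have h3 := tendsto_nhds_unique h1 h2
    have h4 : L = 1 := by
      have : ((t : ℝ) / (t + 1)) ^ t * (1 - L) = 0 := by linarith
      rcases mul_eq_zero.1 this with h | h
      · exact absurd h (greedyRatio_coeff_mem t).1.ne'
      · linarith
    rw [← h4]; exact hL

lemma div_pow_add_ge (s : ℕ) {m M : ℝ} (hm : 0 < m) (hM : 0 < M) :
    M * (((s : ℝ) + 1) / M) ^ (s + 1) ≤ (s / m) ^ s + m * (((s : ℝ) + 1) / M) ^ (s + 1) := by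
  set τ := ((s : ℝ) + 1) / M with hτ
  have hτ0 : 0 < τ := by positivity
  have hMτ : M * τ = s + 1 := by rw [hτ]; field_simp
  set u := m * τ with hu
  have hu0 : 0 < u := by positivity
  have key : (s : ℝ) + 1 ≤ (s / u) ^ s + u := by
    have h1 := one_add_mul_le_pow (a := (s : ℝ) / u - 1)
      (by linarith [show 0 ≤ (s : ℝ) / u by positivity]) s
    rw [add_sub_cancel] at h1
    have h2 : (s : ℝ) + 1 ≤ 1 + s * (s / u - 1) + u := by
      rw [← sub_nonneg, show 1 + s * (s / u - 1) + u - ((s : ℝ) + 1) = (u - s) ^ 2 / u by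
        field_simp; ring]
      positivity
    linarith
  have e1 : (s / m : ℝ) ^ s = (s / u) ^ s * τ ^ s := by
    rw [← mul_pow, hu]; congr 1; field_simp
  rw [e1, pow_succ]
  calc M * (τ ^ s * τ) = (s + 1) * τ ^ s := by rw [← hMτ]; ring
    _ ≤ ((s / u) ^ s + u) * τ ^ s := by gcongr
    _ = _ := by rw [hu]; ring

section GreedyClique

variable {V : Type} [Fintype V] [DecidableEq V]

/-- Law of the random set which is `insert v K` with `K` of law `ν v`, for each `v ∈ H` with
probability `1 / (#H + D)`, and has law `μ` with the remaining probability. -/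
noncomputable def insertMix (H : Finset V) (D : ℝ) (ν : V → Finset V → ℝ) (μ : Finset V → ℝ)
    (K : Finset V) : ℝ :=
  (∑ v ∈ H, ∑ L, (if insert v L = K then ν v L else 0) + D * μ K) / (#H + D)

lemma sum_insertMix_mul (H : Finset V) (D : ℝ) (ν : V → Finset V → ℝ) (μ f : Finset V → ℝ) :
    ∑ K, insertMix H D ν μ K * f K =
      (∑ v ∈ H, ∑ L, ν v L * f (insert v L) + D * ∑ L, μ L * f L) / (#H + D) := by
  simp only [insertMix, div_mul_eq_mul_div, ← sum_div, add_mul, sum_add_distrib, sum_mul]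
  congr 2
  · rw [sum_comm]
    refine sum_congr rfl fun v _ => ?_
    rw [sum_comm]
    refine sum_congr rfl fun L _ => ?_
    simp [ite_mul]
  · rw [mul_sum]; exact sum_congr rfl fun _ _ => by ring

/-- Weight of the sets containing `T`. -/
noncomputable def upWeight (μ : Finset V → ℝ) (T : Finset V) : ℝ :=
  ∑ K, μ K * if T ⊆ K then 1 else 0

lemma upWeight_nonneg {μ : Finset V → ℝ} (hμ : ∀ K, 0 ≤ μ K) (T : Finset V) : 0 ≤ upWeight μ T :=
  sum_nonneg fun K _ => mul_nonneg (hμ K) (by split_ifs <;> simp)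

lemma upWeight_insertMix (H : Finset V) (D : ℝ) (ν : V → Finset V → ℝ) (μ : Finset V → ℝ)
    (T : Finset V) :
    upWeight (insertMix H D ν μ) T =
      (∑ v ∈ H, upWeight (ν v) (T.erase v) + D * upWeight μ T) / (#H + D) := by
  simp only [upWeight, sum_insertMix_mul, subset_insert_iff]

lemma insertMix_nonneg {H : Finset V} {D : ℝ} (hD : 0 < D) {ν : V → Finset V → ℝ}
    {μ : Finset V → ℝ} (hν : ∀ v L, 0 ≤ ν v L) (hμ : ∀ L, 0 ≤ μ L) (K : Finset V) :
    0 ≤ insertMix H D ν μ K :=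
  div_nonneg (add_nonneg (sum_nonneg fun v _ => sum_nonneg fun L _ => by
    split_ifs <;> simp [hν]) (mul_nonneg hD.le (hμ K))) (by positivity)

lemma exists_of_insertMix_ne_zero {H : Finset V} {D : ℝ} {ν : V → Finset V → ℝ}
    {μ : Finset V → ℝ} {K : Finset V} (h : insertMix H D ν μ K ≠ 0) :
    (∃ v ∈ H, ∃ L, insert v L = K ∧ ν v L ≠ 0) ∨ μ K ≠ 0 := by
  by_contra! hc
  refine h ?_
  rw [insertMix, hc.2, sum_eq_zero, mul_zero, add_zero, zero_div]
  intro v hv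
  refine sum_eq_zero fun L _ => ?_
  split_ifs with hL
  · exact hc.1 v hv L hL
  · rfl

/-- Vertices of `H` adjacent to `v`. -/
noncomputable def nbrIn (G : SimpleGraph V) (H : Finset V) (v : V) : Finset V :=
  H.filter fun u => G.Adj v u

lemma card_nbrIn_le (G : SimpleGraph V) (H : Finset V) (v : V) : #(nbrIn G H v) ≤ #H :=
  card_le_card (filter_subset _ _)

lemma sum_card_nbrIn_le (G : SimpleGraph V) (H T : Finset V) {s : ℕ} (hT : #T = s + 1) :
    ∑ v ∈ T, #(nbrIn G H v) ≤ #{w ∈ H | ∀ u ∈ T, G.Adj u w} + s * #H := by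
  simp only [nbrIn, card_filter]
  rw [sum_comm, mul_comm, ← smul_eq_mul, ← sum_const, ← sum_add_distrib]
  refine sum_le_sum fun w _ => ?_
  rw [← card_filter]
  split_ifs with h
  · exact (card_le_card (filter_subset _ _)).trans (by omega)
  · push Not at h
    obtain ⟨u, hu, huw⟩ := h
    have : #(T.filter fun v => G.Adj v w) < #T :=
      card_lt_card ((filter_ssubset).2 ⟨u, hu, huw⟩)
    omega

lemma greedy_step_bound {ι : Type} (T : Finset ι) {s : ℕ} (hT : #T = s + 1) (m : ι → ℝ)
    {M c α α' : ℝ} (hm : ∀ v ∈ T, 0 < m v) (hmM : ∀ v ∈ T, m v ≤ M) (hM : 0 < M)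
    (hc : ∑ v ∈ T, m v - s * M ≤ c) (hα' : 0 ≤ α') (hα : α' ≤ α) :
    (α' + ((s : ℝ) / (s + 1)) ^ s * (α - α')) * (M * (((s : ℝ) + 1) / M) ^ (s + 1)) ≤
      ∑ v ∈ T, α * (s / m v) ^ s + c * (α' * (((s : ℝ) + 1) / M) ^ (s + 1)) := by
  set q := (((s : ℝ) + 1) / M) ^ (s + 1) with hq
  have hq0 : 0 ≤ q := by positivity
  set A := ∑ v ∈ T, (s / m v) ^ s with hA
  have h1 : (s + 1) * (M * q) ≤ A + (∑ v ∈ T, m v) * q := by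
    have := sum_le_sum fun v (hv : v ∈ T) => div_pow_add_ge s (hm v hv) hM
    rw [sum_const, hT, sum_add_distrib, ← sum_mul] at this
    simpa using this
  have h2 : M * q ≤ A + c * q := by nlinarith
  have h3 : ((s : ℝ) / (s + 1)) ^ s * (M * q) ≤ A := by
    have : (s + 1) * ((s : ℝ) / M) ^ s ≤ A := by
      have := sum_le_sum (s := T) (f := fun _ => ((s : ℝ) / M) ^ s)
        (g := fun v => ((s : ℝ) / m v) ^ s) fun v hv => by
        have := hm v hv
        have := hmM v hv
        gcongr
      rw [sum_const, hT] at this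
      simpa using this
    refine le_trans (le_of_eq ?_) this
    rw [hq, pow_succ, div_pow, div_pow, div_pow]
    field_simp
  rw [← mul_sum]
  nlinarith [mul_le_mul_of_nonneg_left h2 hα', mul_le_mul_of_nonneg_left h3 (sub_nonneg.2 hα)]

/-- A random clique with at most `k` vertices which contains every given clique of size `t` with
nearly the probability it has in the complete `t`-partite case. -/
theorem exists_greedy_law (G : SimpleGraph V) {D : ℝ} (hD : 0 < D) (k : ℕ) (H : Finset V) :
    ∃ μ : Finset V → ℝ, (∀ K, 0 ≤ μ K) ∧
      (∀ K, μ K ≠ 0 → K ⊆ H ∧ G.IsClique (K : Set V) ∧ #K ≤ k) ∧ ∑ K, μ K = 1 ∧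
      (∀ T ⊆ H, G.IsClique (T : Set V) →
        greedyRatio k #T * (#T / (#H + D)) ^ #T ≤ upWeight μ T) ∧
      ∀ S, upWeight μ S ≤ (k / D) ^ #S := by
  induction k generalizing H with
  | zero =>
    refine ⟨fun K => if K = ∅ then 1 else 0, fun K => by dsimp only; split_ifs <;> simp, ?_, by simp, ?_, ?_⟩
    · intro K hK
      have : K = ∅ := by by_contra h; simp [h] at hK
      simp [this]
    · intro T _ _
      rcases T.eq_empty_or_nonempty with rfl | hT
      · simp [upWeight, greedyRatio_zero_right]
      · obtain ⟨s, hs⟩ : ∃ s, #T = s + 1 := ⟨#T - 1, by have := hT.card_pos; omega⟩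
        simp only [hs, greedyRatio, zero_mul]
        exact sum_nonneg fun K _ => mul_nonneg (by dsimp only; split_ifs <;> simp)
          (by split_ifs <;> simp)
    · intro S
      rcases S.eq_empty_or_nonempty with rfl | hS
      · simp [upWeight]
      · refine (sum_nonpos fun K _ => ?_).trans (by positivity)
        by_cases hK : K = ∅
        · simp [hK, hS.ne_empty]
        · simp [hK]
  | succ k ih =>
    obtain ⟨μ, μ0, μs, μ1, μl, μu⟩ := ih H
    choose ν ν0 νs ν1 νl νu using fun v => ih (nbrIn G H v)
    have hM : 0 < (#H : ℝ) + D := by positivity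
    refine ⟨insertMix H D ν μ, insertMix_nonneg hD ν0 μ0, ?_, ?_, ?_, ?_⟩
    · intro K hK
      rcases exists_of_insertMix_ne_zero hK with ⟨v, hv, L, rfl, hL⟩ | hK
      · obtain ⟨h1, h2, h3⟩ := νs v L hL
        refine ⟨insert_subset hv (h1.trans (filter_subset _ _)), ?_,
          (card_insert_le _ _).trans (by omega)⟩
        rw [coe_insert]
        exact h2.insert fun b hb _ => (mem_filter.1 (h1 hb)).2
      · obtain ⟨h1, h2, h3⟩ := μs K hK
        exact ⟨h1, h2, by omega⟩
    · have := sum_insertMix_mul H D ν μ fun _ => 1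
      simp only [mul_one] at this
      rw [this, sum_congr rfl fun v _ => ν1 v, μ1]
      simp [hM.ne']
    · intro T hTH hT
      rcases T.eq_empty_or_nonempty with rfl | hne
      · simp only [upWeight_insertMix, erase_empty, card_empty, greedyRatio_zero_right, pow_zero]
        rw [le_div_iff₀ hM]
        have h1 : ∀ v ∈ H, (1 : ℝ) ≤ upWeight (ν v) ∅ := fun v _ => by
          simpa [greedyRatio_zero_right] using νl v ∅ (empty_subset _) (by simp)
        have h2 : 1 ≤ upWeight μ ∅ := by
          simpa [greedyRatio_zero_right] using μl ∅ (empty_subset _) (by simp)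
        have h3 := sum_le_sum h1
        simp only [sum_const, nsmul_eq_mul, mul_one] at h3
        nlinarith
      obtain ⟨s, hs⟩ : ∃ s, #T = s + 1 := ⟨#T - 1, by have := hne.card_pos; omega⟩
      set C := {w ∈ H | ∀ u ∈ T, G.Adj u w} with hC
      have hdisj : Disjoint T C := disjoint_left.2 fun v hvT hvC =>
        G.irrefl ((mem_filter.1 hvC).2 v hvT)
      have hmle : ∀ v, (#(nbrIn G H v) : ℝ) + D ≤ #H + D := fun v => by
        have : (#(nbrIn G H v) : ℝ) ≤ #H := by exact_mod_cast card_nbrIn_le G H v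
        linarith
      have hα0 := greedyRatio_nonneg k (s + 1)
      have hvT : ∀ v ∈ T, greedyRatio k s * (s / (#(nbrIn G H v) + D)) ^ s ≤
          upWeight (ν v) (T.erase v) := by
        intro v hv
        have := νl v (T.erase v) (fun u hu => mem_filter.2 ⟨hTH (mem_of_mem_erase hu),
          hT hv (mem_of_mem_erase hu) (ne_of_mem_erase hu).symm⟩)
          (hT.subset (by simp))
        rwa [card_erase_of_mem hv, hs, Nat.add_sub_cancel] at this
      have hvC : ∀ v ∈ C, greedyRatio k (s + 1) * (((s : ℝ) + 1) / (#H + D)) ^ (s + 1) ≤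
          upWeight (ν v) (T.erase v) := by
        intro v hv
        have hvT : v ∉ T := fun h => disjoint_left.1 hdisj h hv
        have := νl v T (fun u hu => mem_filter.2 ⟨hTH hu, ((mem_filter.1 hv).2 u hu).symm⟩) hT
        rw [erase_eq_of_notMem hvT]
        rw [hs] at this
        push_cast at this
        refine le_trans ?_ this
        have := hmle v
        gcongr
      have hμT : greedyRatio k (s + 1) * (((s : ℝ) + 1) / (#H + D)) ^ (s + 1) ≤ upWeight μ T := by
        simpa [hs] using μl T hTH hT
      have hsum : ∑ v ∈ T, greedyRatio k s * (s / (#(nbrIn G H v) + D)) ^ s +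
          #C * (greedyRatio k (s + 1) * (((s : ℝ) + 1) / (#H + D)) ^ (s + 1)) ≤
          ∑ v ∈ H, upWeight (ν v) (T.erase v) := by
        calc _ ≤ ∑ v ∈ T, upWeight (ν v) (T.erase v) + ∑ v ∈ C, upWeight (ν v) (T.erase v) := by
              refine add_le_add (sum_le_sum hvT) ?_
              rw [← nsmul_eq_mul, ← sum_const]
              exact sum_le_sum hvC
          _ = ∑ v ∈ T ∪ C, upWeight (ν v) (T.erase v) := (sum_union hdisj).symm
          _ ≤ _ := sum_le_sum_of_subset_of_nonneg (union_subset hTH (filter_subset _ _))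
              fun v _ _ => upWeight_nonneg (ν0 v) _
      have hcount : ∑ v ∈ T, ((#(nbrIn G H v) : ℝ) + D) - s * (#H + D) ≤ #C + D := by
        have : ∑ v ∈ T, (#(nbrIn G H v) : ℝ) ≤ #C + s * #H := by
          exact_mod_cast sum_card_nbrIn_le G H T hs
        rw [sum_add_distrib, sum_const, hs]
        simp only [nsmul_eq_mul]
        push_cast
        linarith
      have key := greedy_step_bound T hs (fun v => (#(nbrIn G H v) : ℝ) + D)
        (fun v _ => by positivity) (fun v _ => hmle v) hM hcount hα0 (greedyRatio_succ_right_le k s)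
      rw [upWeight_insertMix, le_div_iff₀ hM, hs, greedyRatio]
      push_cast
      have hD' := mul_le_mul_of_nonneg_left hμT hD.le
      linarith
    · intro S
      rw [upWeight_insertMix, div_le_iff₀ hM]
      rcases S.eq_empty_or_nonempty with rfl | hne
      · have h1 : ∀ v ∈ H, upWeight (ν v) ((∅ : Finset V).erase v) ≤ 1 := fun v _ => by
          simpa using νu v ∅
        have h2 : upWeight μ ∅ ≤ 1 := by simpa using μu ∅
        have h3 := sum_le_sum h1
        simp only [sum_const, nsmul_eq_mul, mul_one] at h3
        rw [card_empty, pow_zero]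
        nlinarith
      obtain ⟨s, hs⟩ : ∃ s, #S = s + 1 := ⟨#S - 1, by have := hne.card_pos; omega⟩
      set q := (k : ℝ) / D with hq
      have hq0 : 0 ≤ q := by positivity
      have hkq : ((k + 1 : ℕ) : ℝ) / D = q + 1 / D := by rw [hq]; push_cast; ring
      have h1 : ∀ v ∈ H, upWeight (ν v) (S.erase v) ≤ (if v ∈ S then q ^ s else 0) + q ^ (s + 1) := by
        intro v _
        refine (νu v _).trans ?_
        split_ifs with hv
        · rw [card_erase_of_mem hv, hs, Nat.add_sub_cancel]
          linarith [pow_nonneg hq0 (s + 1)]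
        · rw [erase_eq_of_notMem hv, hs, zero_add]
      have h2 := μu S
      rw [hs] at h2
      have h3 := sum_le_sum h1
      rw [sum_add_distrib, ← sum_filter, sum_const, sum_const] at h3
      simp only [nsmul_eq_mul] at h3
      have h4 : (#(H.filter (· ∈ S)) : ℝ) ≤ s + 1 := by
        have : #(H.filter (· ∈ S)) ≤ #S := card_le_card fun v hv => (mem_filter.1 hv).2
        rw [hs] at this; exact_mod_cast this
      have h5 : q ^ (s + 1) + (s + 1) * (q ^ s * (1 / D)) ≤ (q + 1 / D) ^ (s + 1) := by
        simpa [mul_assoc] using pow_add_mul_le_add_pow hq0 (by positivity : 0 ≤ 2 * q + 1 / D) (s + 1)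
      have h6 : (s + 1) * q ^ s ≤ (s + 1) * (q ^ s * (1 / D)) * (#H + D) := by
        have : 1 ≤ 1 / D * (#H + D) := by
          rw [one_div, ← div_eq_inv_mul, one_le_div hD]; simp
        nlinarith [pow_nonneg hq0 s, mul_nonneg (by positivity : (0:ℝ) ≤ s + 1) (pow_nonneg hq0 s)]
      rw [hkq, hs]
      have h7 := mul_le_mul_of_nonneg_right h5 hM.le
      have h8 := mul_le_mul_of_nonneg_right h4 (pow_nonneg hq0 s)
      have h9 := mul_le_mul_of_nonneg_left h2 hD.le
      linarith

end GreedyClique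

section CliqueCovers

variable {V : Type} [Fintype V] [DecidableEq V]

lemma bddBelow_intCover_cost (t : ℕ) (G : SimpleGraph V) :
    BddBelow {x | ∃ f, IsIntCover t G f ∧ x = cliqueCost (fun _ => 1) f} := by
  refine ⟨0, ?_⟩
  rintro _ ⟨f, hf, rfl⟩
  exact sum_nonneg fun K _ => by simpa using hf.1.1 K

lemma thetaInt_le_card {t : ℕ} {G : SimpleGraph V} (C : Finset (Finset V))
    (hC : ∀ K ∈ C, IsCliqueOf G K)
    (hcov : ∀ T : Finset V, #T = t → G.IsClique (T : Set V) → ∃ K ∈ C, T ⊆ K) :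
    thetaInt t G (fun _ => 1) ≤ #C := by
  refine csInf_le (bddBelow_intCover_cost t G) ⟨fun K => if K ∈ C then 1 else 0, ⟨⟨?_, ?_, ?_⟩, ?_⟩,
    by simp [cliqueCost]⟩
  · intro K; dsimp only; split_ifs <;> simp
  · intro K hK; exact if_neg fun h => hK (hC K h)
  · intro T hT hTc
    obtain ⟨K, hK, hTK⟩ := hcov T hT hTc
    refine le_trans (by simp [hK]) (single_le_sum (f := fun K => if K ∈ C then (1 : ℝ) else 0)
      (fun K _ => by split_ifs <;> simp) (mem_filter.2 ⟨mem_univ K, hTK⟩))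
  · intro K; by_cases h : K ∈ C <;> simp [h]

/-- In a graph without cliques on `t + 1` vertices each clique covers at most one `t`-clique. -/
lemma card_le_thetaInt {t : ℕ} (ht : 0 < t) {G : SimpleGraph V} (hG : G.CliqueFree (t + 1))
    (S : Finset (Finset V)) (hS : ∀ T ∈ S, #T = t ∧ G.IsClique (T : Set V)) :
    (#S : ℝ) ≤ thetaInt t G (fun _ => 1) := by
  refine le_csInf ⟨_, fun K => if IsCliqueOf G K then 1 else 0, ⟨⟨?_, ?_, ?_⟩, ?_⟩, rfl⟩ ?_
  · intro K; dsimp only; split_ifs <;> simp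
  · intro K hK; exact if_neg hK
  · intro T hT hTc
    have hTc' : IsCliqueOf G T := ⟨card_pos.1 (by omega), hTc⟩
    refine le_trans (by simp [hTc']) (single_le_sum
      (f := fun K => if IsCliqueOf G K then (1 : ℝ) else 0)
      (fun K _ => by split_ifs <;> simp) (mem_filter.2 ⟨mem_univ T, Subset.refl T⟩))
  · intro K; by_cases h : IsCliqueOf G K <;> simp [h]
  · rintro _ ⟨f, ⟨⟨f0, fc, f1⟩, -⟩, rfl⟩
    have hle : ∀ T ∈ S, 1 ≤ f T := by
      intro T hT
      obtain ⟨hTt, hTc⟩ := hS T hT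
      refine (f1 T hTt hTc).trans (le_of_eq (sum_eq_single T ?_ ?_))
      · intro K hK hne
        refine fc K fun hKc => ?_
        have hlt : #T < #K := card_lt_card ((mem_filter.1 hK).2.ssubset_of_ne hne.symm)
        obtain ⟨K', hK', hcard⟩ := exists_subset_card_eq (show t + 1 ≤ #K by omega)
        exact hG K' ⟨hKc.2.subset (by exact_mod_cast hK'), hcard⟩
      · simp
    calc (#S : ℝ) = ∑ T ∈ S, 1 := by simp
      _ ≤ ∑ T ∈ S, f T := sum_le_sum hle
      _ ≤ ∑ K, f K := sum_le_sum_of_subset_of_nonneg (subset_univ _) fun K _ _ => f0 K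
      _ = _ := by simp [cliqueCost]

end CliqueCovers

lemma exists_cliques_turanGraph {t : ℕ} (ht : 0 < t) (n : ℕ) :
    ∃ S : Finset (Finset (Fin n)), #S = (n / t) ^ t ∧
      ∀ T ∈ S, #T = t ∧ (SimpleGraph.turanGraph n t).IsClique (T : Set (Fin n)) := by
  have hlt : ∀ (i : Fin t) (a : Fin (n / t)), (i : ℕ) + t * a < n := by
    intro i a
    calc (i : ℕ) + t * a < t + t * a := by have := i.2; omega
      _ = t * (a + 1) := by ring
      _ ≤ t * (n / t) := Nat.mul_le_mul_left t a.2
      _ ≤ n := Nat.mul_div_le n t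
  set e : (Fin t → Fin (n / t)) → Fin t → Fin n := fun g i => ⟨i + t * g i, hlt i (g i)⟩ with he
  have hmod : ∀ g i, (e g i : ℕ) % t = i := fun g i => by
    simp [he, Nat.add_mul_mod_self_left, Nat.mod_eq_of_lt i.2]
  have hinj : ∀ g, Function.Injective (e g) := fun g i j hij => by
    have := congrArg (fun x : Fin n => (x : ℕ) % t) hij
    simpa [hmod, Fin.ext_iff] using this
  refine ⟨univ.image fun g => univ.image (e g), ?_, ?_⟩
  · rw [card_image_of_injective, card_univ, Fintype.card_fun, Fintype.card_fin, Fintype.card_fin]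
    intro g g' hgg'
    funext i
    have : e g i ∈ univ.image (e g') := by
      have h : univ.image (e g) = univ.image (e g') := hgg'
      rw [← h]; exact mem_image_of_mem _ (mem_univ i)
    obtain ⟨j, -, hj⟩ := mem_image.1 this
    have hij : j = i := by
      have := congrArg (fun x : Fin n => (x : ℕ) % t) hj
      simpa [hmod, Fin.ext_iff] using this
    subst hij
    have h := congrArg (fun x : Fin n => (x : ℕ)) hj
    simp only [he] at h
    exact Fin.ext (Nat.eq_of_mul_eq_mul_left ht (by omega))
  · intro T hT
    obtain ⟨g, -, rfl⟩ := mem_image.1 hT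
    refine ⟨by rw [card_image_of_injective _ (hinj g)]; simp, ?_⟩
    intro x hx y hy hxy
    simp only [coe_image, coe_univ, Set.image_univ, Set.mem_range] at hx hy
    obtain ⟨i, rfl⟩ := hx
    obtain ⟨j, rfl⟩ := hy
    rw [SimpleGraph.turanGraph_adj, hmod, hmod]
    intro h
    exact hxy (by rw [Fin.ext h])

section Rounding

variable {V : Type} [Fintype V] [DecidableEq V]

/-- The weighting of the set systems induced by `μ` through `K ↦ powersetCard t K`. -/
noncomputable def powersetWeight (t : ℕ) (μ : Finset V → ℝ) (L : Finset (Finset V)) : ℝ :=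
  ∑ K, if powersetCard t K = L then μ K else 0

lemma sum_powersetWeight_mul (t : ℕ) (μ : Finset V → ℝ) (f : Finset (Finset V) → ℝ) :
    ∑ L, powersetWeight t μ L * f L = ∑ K, μ K * f (powersetCard t K) := by
  simp only [powersetWeight, sum_mul]
  rw [sum_comm]
  exact sum_congr rfl fun K _ => by simp [ite_mul]

lemma powersetWeight_nonneg (t : ℕ) {μ : Finset V → ℝ} (hμ : ∀ K, 0 ≤ μ K)
    (L : Finset (Finset V)) : 0 ≤ powersetWeight t μ L :=
  sum_nonneg fun K _ => by split_ifs <;> simp [hμ]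

lemma totalWeight_powersetWeight (t : ℕ) (μ : Finset V → ℝ) :
    totalWeight (powersetWeight t μ) = ∑ K, μ K := by
  simpa [totalWeight] using sum_powersetWeight_mul t μ fun _ => 1

lemma wdeg_powersetWeight {t : ℕ} (μ : Finset V → ℝ) {T : Finset V} (hT : #T = t) :
    wdeg (powersetWeight t μ) T = upWeight μ T := by
  have := sum_powersetWeight_mul t μ fun L => if T ∈ L then 1 else 0
  simpa [wdeg, upWeight, mem_powersetCard, hT] using this

lemma wcodeg_powersetWeight_le {t : ℕ} {μ : Finset V → ℝ} (hμ : ∀ K, 0 ≤ μ K) {κ : ℝ}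
    (hκ0 : 0 ≤ κ) (hκ : ∀ S, #S = t + 1 → upWeight μ S ≤ κ) {T T' : Finset V} (hne : T ≠ T') :
    wcodeg (powersetWeight t μ) T T' ≤ κ := by
  have h := sum_powersetWeight_mul t μ fun L => if T ∈ L ∧ T' ∈ L then 1 else 0
  have h' : wcodeg (powersetWeight t μ) T T' = ∑ K, μ K *
      if T ∈ powersetCard t K ∧ T' ∈ powersetCard t K then 1 else 0 := by
    rw [← h]; simp [wcodeg]
  rw [h']
  by_cases hTT : #T = t ∧ #T' = t
  · have hlt : t < #(T ∪ T') := by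
      by_contra! hle
      have h1 := eq_of_subset_of_card_le (subset_union_left : T ⊆ T ∪ T') (by omega)
      have h2 := eq_of_subset_of_card_le (subset_union_right : T' ⊆ T ∪ T') (by omega)
      exact hne (h1.trans h2.symm)
    obtain ⟨S, hS, hcard⟩ := exists_subset_card_eq (show t + 1 ≤ #(T ∪ T') from hlt)
    refine le_trans (sum_le_sum fun K _ => mul_le_mul_of_nonneg_left ?_ (hμ K)) (hκ S hcard)
    by_cases hK : T ∈ powersetCard t K ∧ T' ∈ powersetCard t K
    · have : S ⊆ K := hS.trans
        (union_subset (mem_powersetCard.1 hK.1).1 (mem_powersetCard.1 hK.2).1)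
      simp [this, ite_le_one]
    · rw [if_neg hK]; split_ifs <;> simp
  · refine le_trans (le_of_eq (sum_eq_zero fun K _ => ?_)) hκ0
    rw [if_neg, mul_zero]
    simp only [mem_powersetCard]
    tauto

/-- Rounding: a fractional `t`-clique cover by bounded cliques in which no `t + 1` vertices get
much weight can be replaced by an integral one of nearly the same cost. -/
theorem exists_thetaInt_le_of_weighting {t : ℕ} (ht : 0 < t) (k : ℕ) {ε : ℝ} (hε : 0 < ε) :
    ∃ κ : ℝ, 0 < κ ∧ ∀ (V : Type) [Fintype V] [DecidableEq V] (G : SimpleGraph V)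
      (μ : Finset V → ℝ), (∀ K, 0 ≤ μ K) → (∀ K, μ K ≠ 0 → G.IsClique (K : Set V) ∧ #K ≤ k) →
      (∀ T, #T = t → G.IsClique (T : Set V) → 1 ≤ upWeight μ T) →
      (∀ S, #S = t + 1 → upWeight μ S ≤ κ) → 1 ≤ κ * ∑ K, μ K →
      thetaInt t G (fun _ => 1) ≤ (1 + ε) * ∑ K, μ K := by
  obtain ⟨κ, hκ0, hκ⟩ := exists_cover_of_small_codegree (2 ^ k) Nat.one_le_two_pow ε hε
  refine ⟨κ, hκ0, ?_⟩
  intro V _ _ G μ μ0 μs μ1 μu μW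
  set U : Finset (Finset V) := {T : Finset V | #T = t ∧ G.IsClique (T : Set V)} with hU
  have memU : ∀ T, T ∈ U ↔ #T = t ∧ G.IsClique (T : Set V) := fun T => by simp [hU]
  obtain ⟨v, v0, vP, vcod, vW, vdeg, -⟩ := exists_thinning
    (P := fun L : Finset (Finset V) => L ⊆ U ∧ #L ≤ 2 ^ k ∧
      ∃ Q : Finset V, G.IsClique (Q : Set V) ∧ ∀ T ∈ L, T ⊆ Q)
    (fun K L hKL hL => ⟨hKL.trans hL.1, (card_le_card hKL).trans hL.2.1,
      hL.2.2.imp fun Q hQ => ⟨hQ.1, fun T hT => hQ.2 T (hKL hT)⟩⟩)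
    (powersetWeight_nonneg t μ0)
    (fun L hL => by
      obtain ⟨K, -, hK⟩ := exists_ne_zero_of_sum_ne_zero hL
      obtain ⟨hKL, hK0⟩ : powersetCard t K = L ∧ μ K ≠ 0 := by
        by_contra hc; refine hK ?_; split_ifs with h
        · by_contra h'; exact hc ⟨h, h'⟩
        · rfl
      obtain ⟨hc, hk⟩ := μs K hK0
      subst hKL
      refine ⟨fun T hT => ?_, ?_, K, hc, fun T hT => (mem_powersetCard.1 hT).1⟩
      · obtain ⟨h1, h2⟩ := mem_powersetCard.1 hT
        exact (memU T).2 ⟨h2, hc.subset (by exact_mod_cast h1)⟩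
      · rw [card_powersetCard]
        exact (Nat.choose_le_two_pow _ _).trans (Nat.pow_le_pow_right (by norm_num) hk))
    (fun T T' hne => wcodeg_powersetWeight_le μ0 hκ0.le μu hne) U
    (fun T hT => by
      obtain ⟨h1, h2⟩ := (memU T).1 hT
      rw [wdeg_powersetWeight μ h1]
      exact μ1 T h1 h2)
  rw [totalWeight_powersetWeight] at vW
  obtain ⟨C, hC, hcard⟩ := hκ (Finset V) v U v0 (fun L hL => (vP L hL).2.1)
    (fun L hL => (vP L hL).1) vdeg vcod (by rw [vW]; exact μW)
  rw [vW] at hcard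
  choose! Q hQc hQs using fun L (hL : v L ≠ 0) => (vP L hL).2.2
  refine le_trans (thetaInt_le_card ((C.image Q).filter (·.Nonempty) ∪ (U \ C.biUnion id))
    ?_ ?_) (le_trans ?_ hcard)
  · intro K hK
    rcases mem_union.1 hK with hK | hK
    · obtain ⟨h1, h2⟩ := mem_filter.1 hK
      obtain ⟨L, hL, rfl⟩ := mem_image.1 h1
      exact ⟨h2, hQc L (hC L hL)⟩
    · obtain ⟨h1, h2⟩ := (memU K).1 (mem_sdiff.1 hK).1
      exact ⟨card_pos.1 (by omega), h2⟩
  · intro T hT hTc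
    by_cases hTC : T ∈ C.biUnion id
    · obtain ⟨L, hL, hTL⟩ := mem_biUnion.1 hTC
      have hTQ := hQs L (hC L hL) T hTL
      have hne : T.Nonempty := card_pos.1 (by omega)
      exact ⟨Q L, mem_union_left _ (mem_filter.2 ⟨mem_image_of_mem _ hL, hne.mono hTQ⟩), hTQ⟩
    · exact ⟨T, mem_union_right _ (mem_sdiff.2 ⟨(memU T).2 ⟨hT, hTc⟩, hTC⟩), Subset.refl T⟩
  · have : #((C.image Q).filter (·.Nonempty) ∪ (U \ C.biUnion id)) ≤ #C + #(U \ C.biUnion id) :=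
      (card_union_le _ _).trans (Nat.add_le_add_right
        ((card_le_card (filter_subset _ _)).trans card_image_le) _)
    exact_mod_cast this

end Rounding

theorem eventually_thetaInt_le {t : ℕ} (ht : 0 < t) {δ : ℝ} (hδ : 0 < δ) :
    ∀ᶠ n : ℕ in Filter.atTop, ∀ G : SimpleGraph (Fin n),
      thetaInt t G (fun _ => 1) ≤ (1 + δ) ^ (t + 2) * ((n : ℝ) / t) ^ t := by
  have ht' : (0 : ℝ) < t := by exact_mod_cast ht
  obtain ⟨k, hk⟩ := ((tendsto_greedyRatio t).eventually
    (lt_mem_nhds (show (1 + δ)⁻¹ < 1 from inv_lt_one_of_one_lt₀ (by linarith)))).exists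
  set ρ := greedyRatio k t with hρ
  have hρ0 : 0 < ρ := lt_trans (by positivity) hk
  obtain ⟨κ, hκ0, hκ⟩ := exists_thetaInt_le_of_weighting ht k hδ
  have hlim := tendsto_natCast_atTop_atTop (R := ℝ)
  filter_upwards [hlim.eventually_ge_atTop 1, hlim.eventually_ge_atTop (t : ℝ),
    hlim.eventually_ge_atTop (t / κ),
    hlim.eventually_ge_atTop (((1 + δ) / t) ^ t / ρ * (k / δ) ^ (t + 1) / κ)] with n h1 h2 h3 h4 G
  have hn : (0 : ℝ) < n := by linarith
  have hD : 0 < δ * n := by positivity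
  obtain ⟨μ, μ0, μs, μ1, μl, μu⟩ := exists_greedy_law G hD k univ
  have hM : ((#(univ : Finset (Fin n)) : ℕ) : ℝ) + δ * n = (1 + δ) * n := by
    simp; ring
  rw [hM] at μl
  set W := ((1 + δ) * n / t) ^ t / ρ with hW
  have hW0 : 0 < W := by positivity
  have hup : ∀ T, upWeight (fun K => W * μ K) T = W * upWeight μ T := fun T => by
    simp only [upWeight, mul_sum, mul_assoc]
  have hsum : ∑ K, W * μ K = W := by rw [← mul_sum, μ1, mul_one]
  have hWge : (n : ℝ) / t ≤ W := by
    have hnt : 1 ≤ (n : ℝ) / t := by rwa [one_le_div ht']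
    calc (n : ℝ) / t ≤ ((n : ℝ) / t) ^ t := le_self_pow₀ hnt ht.ne'
      _ ≤ ((1 + δ) * n / t) ^ t := by gcongr; nlinarith
      _ ≤ W := by rw [hW, le_div_iff₀ hρ0]
                  exact mul_le_of_le_one_right (by positivity) (greedyRatio_le_one k t)
  have hfin := hκ (Fin n) G (fun K => W * μ K) (fun K => mul_nonneg hW0.le (μ0 K))
    (fun K hK => (μs K (right_ne_zero_of_mul hK)).2)
    (fun T hT hTc => by
      have := μl T (subset_univ _) hTc
      rw [hT, ← hρ] at this
      rw [hup]
      refine le_trans (le_of_eq ?_) (mul_le_mul_of_nonneg_left this hW0.le)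
      rw [hW, div_pow, div_pow]
      field_simp)
    (fun S hS => by
      have := μu S
      rw [hS] at this
      rw [hup]
      refine (mul_le_mul_of_nonneg_left this hW0.le).trans ?_
      rw [div_le_iff₀ hκ0] at h4
      have e : W * (k / (δ * n)) ^ (t + 1) =
          ((1 + δ) / t) ^ t / ρ * (k / δ) ^ (t + 1) / n := by
        rw [hW]
        simp only [div_pow, mul_pow, pow_succ]
        field_simp
      rw [e, div_le_iff₀ hn]
      linarith)
    (by
      rw [hsum]
      rw [div_le_iff₀ hκ0] at h3
      have : t / κ / t ≤ W := by
        refine le_trans ?_ hWge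
        gcongr
        rwa [div_le_iff₀ hκ0]
      have e : t / κ / t = 1 / κ := by field_simp
      rw [e, div_le_iff₀ hκ0] at this
      linarith)
  rw [hsum] at hfin
  refine hfin.trans ?_
  have hρ1 : 1 / ρ ≤ 1 + δ := by
    rw [div_le_iff₀ hρ0]
    have := mul_lt_mul_of_pos_left hk (show 0 < 1 + δ by linarith)
    rw [mul_inv_cancel₀ (by positivity)] at this
    exact this.le
  calc (1 + δ) * W = (1 + δ) * ((1 + δ) ^ t * ((n : ℝ) / t) ^ t) * (1 / ρ) := by
        rw [hW, mul_div_assoc, mul_pow]; ring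
    _ ≤ (1 + δ) * ((1 + δ) ^ t * ((n : ℝ) / t) ^ t) * (1 + δ) := by gcongr
    _ = _ := by ring

theorem eventually_le_thetaInt_turanGraph {t : ℕ} (ht : 0 < t) {δ : ℝ} (hδ : 0 < δ) :
    ∀ᶠ n : ℕ in Filter.atTop, ((n : ℝ) / t) ^ t ≤
      (1 + δ) ^ t * thetaInt t (SimpleGraph.turanGraph n t) (fun _ => 1) := by
  have ht' : (0 : ℝ) < t := by exact_mod_cast ht
  have hlim := tendsto_natCast_atTop_atTop (R := ℝ)
  filter_upwards [hlim.eventually_ge_atTop (t * ((1 + δ) / δ))] with n hn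
  obtain ⟨S, hcard, hS⟩ := exists_cliques_turanGraph ht n
  have h1 : (n : ℝ) / t ≤ (1 + δ) * (n / t : ℕ) := by
    have h2 : (n : ℝ) / t - 1 ≤ (n / t : ℕ) := by
      have := Nat.lt_floor_add_one ((n : ℝ) / t)
      rw [Nat.floor_div_eq_div] at this
      linarith
    have h3 : (1 + δ) / δ ≤ (n : ℝ) / t := by rw [le_div_iff₀ ht']; linarith
    rw [div_le_iff₀ hδ] at h3
    nlinarith
  calc ((n : ℝ) / t) ^ t ≤ ((1 + δ) * (n / t : ℕ)) ^ t := by gcongr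
    _ = (1 + δ) ^ t * (((n / t) ^ t : ℕ) : ℝ) := by rw [mul_pow]; push_cast; ring
    _ ≤ _ := by
      gcongr
      rw [← hcard]
      exact card_le_thetaInt ht (SimpleGraph.turanGraph_cliqueFree ht) S hS

/-- Theorem 1.6: for fixed `t ≥ 2`, `θ_t(G) ≤ (1 + ε) θ_t(T_{n,t})` for every
`n`-vertex graph `G`, once `n` is large enough. -/
theorem stmt1 (t : ℕ) (ht : 2 ≤ t) :
    ∀ ε : ℝ, 0 < ε → ∃ N : ℕ, ∀ n : ℕ, N ≤ n → ∀ G : SimpleGraph (Fin n),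
      thetaInt t G (fun _ => 1) ≤
        (1 + ε) * thetaInt t (SimpleGraph.turanGraph n t) (fun _ => 1) := by
  intro ε hε
  have ht0 : 0 < t := by omega
  have hcont : Filter.Tendsto (fun δ : ℝ => (1 + δ) ^ (t + 2 + t)) (nhdsWithin 0 (Set.Ioi 0))
      (nhds 1) := by
    have : Continuous fun δ : ℝ => (1 + δ) ^ (t + 2 + t) := by fun_prop
    simpa using (this.tendsto 0).mono_left nhdsWithin_le_nhds
  obtain ⟨δ, hδε, hδ⟩ := ((hcont.eventually (gt_mem_nhds (show 1 < 1 + ε by linarith))).and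
    self_mem_nhdsWithin).exists
  have hδ0 : 0 < δ := hδ
  obtain ⟨N, hN⟩ := Filter.eventually_atTop.1
    ((eventually_thetaInt_le ht0 hδ0).and (eventually_le_thetaInt_turanGraph ht0 hδ0))
  refine ⟨N, fun n hn G => ?_⟩
  obtain ⟨h1, h2⟩ := hN n hn
  have h3 : 0 ≤ thetaInt t (SimpleGraph.turanGraph n t) (fun _ => 1) :=
    (Nat.cast_nonneg _).trans (card_le_thetaInt ht0 (SimpleGraph.turanGraph_cliqueFree ht0) ∅
      (by simp))
  calc thetaInt t G (fun _ => 1) ≤ (1 + δ) ^ (t + 2) * ((n : ℝ) / t) ^ t := h1 G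
    _ ≤ (1 + δ) ^ (t + 2) *
        ((1 + δ) ^ t * thetaInt t (SimpleGraph.turanGraph n t) (fun _ => 1)) := by gcongr
    _ = (1 + δ) ^ (t + 2 + t) * thetaInt t (SimpleGraph.turanGraph n t) (fun _ => 1) := by
        rw [pow_add]; ring
    _ ≤ _ := by gcongr
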